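/- arXiv:1609.01782 — 3 statements merged into one kernel-verified Lean document; each statement's English description precedes it below -/
import Mathlib

section
/- For all n ≥ 1, the polytope B_n(123,312) ⊆ ℝ^{n×n} (identified with ℝ^{n²}) is unimodularly equivalent to the standard simplex of dimension binom(n,2), namely conv{e_1, …, e_{binom(n,2)+1}} where the e_i are standard basis vectors of ℝ^{n²}. In particular, |Av_n(123,312)| = binom(n,2) + 1 and the corresponding permutation matrices are affinely independent. -/
open Pointwise

/-- `σ` contains the pattern `π`. -/
def containsPattern {n k : ℕ} (σ : Equiv.Perm (Fin n)) (π : Equiv.Perm (Fin k)) : Prop :=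
  ∃ f : Fin k → Fin n, StrictMono f ∧ ∀ a b : Fin k, σ (f a) < σ (f b) ↔ π a < π b

/-- The pattern 123. -/
def p123 : Equiv.Perm (Fin 3) := 1
/-- The pattern 312. -/
def p312 : Equiv.Perm (Fin 3) := (finRotate 3)⁻¹

/-- `Av_n(123,312)`. -/
def Av123312 (n : ℕ) : Set (Equiv.Perm (Fin n)) :=
  {σ : Equiv.Perm (Fin n) | ¬ containsPattern σ p123 ∧ ¬ containsPattern σ p312}

/-- The permutation matrix of `σ`, viewed as a vector in `ℝ^{n×n}`. -/
def permMatrix {n : ℕ} (σ : Equiv.Perm (Fin n)) : Fin n × Fin n → ℝ :=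
  fun p => if σ p.1 = p.2 then 1 else 0

/-- The polytope `B_n(123,312)`. -/
def B123312 (n : ℕ) : Set (Fin n × Fin n → ℝ) :=
  convexHull ℝ (permMatrix '' Av123312 n)

/-- Unimodular equivalence of subsets of `ℝ^ι`. -/
def UnimodEquiv {ι : Type} [Fintype ι] [DecidableEq ι] (P Q : Set (ι → ℝ)) : Prop :=
  ∃ (A : Matrix ι ι ℤ) (b : ι → ℤ), (A.det = 1 ∨ A.det = -1) ∧
    Set.BijOn (fun x => (A.map (fun z : ℤ => (z : ℝ))).mulVec x + fun i => ((b i : ℝ))) P Q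


/-- The block description of the avoiders. -/
def sfun (n a s i : ℕ) : ℕ :=
  if i ≤ a then s - i else if i < a + n - s then n + a - i else n - 1 - i

/-- The index cells. -/
def SS {n : ℕ} (c : Fin n × Fin n) : Prop :=
  (c.1 : ℕ) + (c.2 : ℕ) + 1 < n ∨ ((c.1 : ℕ) = 0 ∧ (c.2 : ℕ) + 1 = n)

lemma mem_Av_iff {n : ℕ} (σ : Equiv.Perm (Fin n)) : σ ∈ Av123312 n ↔
    (∀ i j k, i < j → j < k → ¬ (σ i < σ j ∧ σ j < σ k)) ∧
    (∀ i j k, i < j → j < k → ¬ (σ j < σ k ∧ σ k < σ i)) := by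
  have key : ∀ i j k : Fin n, i < j → j < k → StrictMono ![i, j, k] := by
    intro i j k hij hjk a b hab
    fin_cases a <;> fin_cases b <;> simp at hab ⊢ <;> first | assumption | exact hij.trans hjk
  have h0 : p312 0 = 2 := by decide
  have h1 : p312 1 = 0 := by decide
  have h2 : p312 2 = 1 := by decide
  unfold Av123312
  simp only [Set.mem_ofPred_eq]
  constructor
  · rintro ⟨H1, H2⟩
    refine ⟨fun i j k hij hjk ⟨u, v⟩ => H1 ⟨_, key i j k hij hjk, ?_⟩,
      fun i j k hij hjk ⟨u, v⟩ => H2 ⟨_, key i j k hij hjk, ?_⟩⟩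
    · intro a b
      fin_cases a <;> fin_cases b <;> simp [p123] <;> omega
    · intro a b
      fin_cases a <;> fin_cases b <;> simp [h0, h1, h2] <;> omega
  · rintro ⟨H1, H2⟩
    constructor
    · rintro ⟨f, hf, h⟩
      exact H1 (f 0) (f 1) (f 2) (hf (by decide)) (hf (by decide))
        ⟨(h _ _).2 (by decide), (h _ _).2 (by decide)⟩
    · rintro ⟨f, hf, h⟩
      exact H2 (f 0) (f 1) (f 2) (hf (by decide)) (hf (by decide))
        ⟨(h _ _).2 (by decide), (h _ _).2 (by decide)⟩

lemma exists_perm {n : ℕ} (c : Fin n × Fin n) (hc : SS c) :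
    ∃ σ : Equiv.Perm (Fin n), ∀ i, (σ i : ℕ) = sfun n c.1 (c.1 + c.2) i := by
  obtain ⟨a, v⟩ := c
  have hlt : ∀ i : Fin n, sfun n a (a + v) i < n := by
    intro i
    unfold SS at hc
    unfold sfun
    simp only at hc ⊢
    split_ifs <;> omega
  have hinj : Function.Injective (fun i : Fin n => (⟨sfun n a (a + v) i, hlt i⟩ : Fin n)) := by
    intro i j hij
    simp only [Fin.mk.injEq] at hij
    unfold SS at hc
    unfold sfun at hij
    simp only at hc
    ext
    split_ifs at hij <;> omega
  exact ⟨Equiv.ofBijective _ (Finite.injective_iff_bijective.1 hinj), fun i => rfl⟩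

lemma perm_mem_Av {n : ℕ} (c : Fin n × Fin n) (hc : SS c) (σ : Equiv.Perm (Fin n))
    (h : ∀ i, (σ i : ℕ) = sfun n c.1 (c.1 + c.2) i) : σ ∈ Av123312 n := by
  obtain ⟨a, v⟩ := c
  unfold SS at hc
  simp only at hc h
  rw [mem_Av_iff]
  constructor
  · rintro i j k hij hjk ⟨u, w⟩
    rw [Fin.lt_def] at u w hij hjk
    rw [h, h] at u w
    unfold sfun at u w
    split_ifs at u w <;> omega
  · rintro i j k hij hjk ⟨u, w⟩
    rw [Fin.lt_def] at u w hij hjk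
    rw [h, h] at u w
    unfold sfun at u w
    split_ifs at u w <;> omega

lemma perm_ext_inv {n : ℕ} (σ τ : Equiv.Perm (Fin n))
    (h : ∀ i j, i < j → (σ i < σ j ↔ τ i < τ j)) : σ = τ := by
  have h2 : ∀ i j, σ i < σ j → τ i < τ j := by
    intro i j hij
    rcases lt_trichotomy i j with h' | h' | h'
    · exact (h i j h').1 hij
    · subst h'; exact absurd hij (lt_irrefl _)
    · have h3 : ¬ τ j < τ i := fun h4 => absurd ((h j i h').2 h4) (not_lt.2 hij.le)
      refine lt_of_le_of_ne (not_lt.1 h3) fun h4 => ?_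
      exact h'.ne' (τ.injective h4)
  have hm : StrictMono (fun i => τ (σ.symm i)) := by
    intro i j hij
    exact h2 _ _ (by simpa using hij)
  have hs : Set.range (fun i => τ (σ.symm i)) = Set.range (id : Fin n → Fin n) := by
    rw [Set.range_id]
    exact (σ.symm.trans τ).surjective.range_eq
  have := (StrictMono.range_inj hm strictMono_id).1 hs
  ext i
  have h5 := congrFun this (σ i)
  simp at h5
  rw [h5]

lemma noninv_iff {n : ℕ} (hn : 0 < n) (σ : Equiv.Perm (Fin n)) (hσ : σ ∈ Av123312 n)
    (i j : Fin n) (hij : i < j) :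
    σ i < σ j ↔ (σ i ≤ σ ⟨0, hn⟩ ∧ σ ⟨0, hn⟩ < σ j) := by
  rw [mem_Av_iff] at hσ
  obtain ⟨h1, h2⟩ := hσ
  constructor
  · intro h
    by_cases hi : i = ⟨0, hn⟩
    · subst hi; exact ⟨le_rfl, h⟩
    have hi0 : (⟨0, hn⟩ : Fin n) < i := by
      rw [Fin.lt_def]
      have : (i : ℕ) ≠ 0 := fun h => hi (Fin.ext h)
      simp only; omega
    have a1 := h1 _ _ _ hi0 hij
    have a2 := h2 _ _ _ hi0 hij
    have hne : σ j ≠ σ ⟨0, hn⟩ := fun h => (hi0.trans hij).ne' (σ.injective h)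
    omega
  · rintro ⟨h, h'⟩
    omega

lemma exists_cell {n : ℕ} (hn : 0 < n) (σ : Equiv.Perm (Fin n)) (hσ : σ ∈ Av123312 n) :
    ∃ c : Fin n × Fin n, SS c ∧ ∀ τ : Equiv.Perm (Fin n),
      (∀ i, (τ i : ℕ) = sfun n c.1 (c.1 + c.2) i) → τ = σ := by
  set z : Fin n := ⟨0, hn⟩ with hz
  have hσ' := (mem_Av_iff σ).1 hσ
  -- it suffices to describe the set of large positions
  suffices H : ∃ a s : ℕ, a ≤ s ∧ s < n ∧ (s + 1 = n → a = 0) ∧ (σ z : ℕ) = s ∧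
      ∀ i, σ z < σ i ↔ (a < (i : ℕ) ∧ (i : ℕ) < a + n - s) by
    obtain ⟨a, s, has, hs, h0, hz', hL⟩ := H
    have hc : SS ((⟨a, by omega⟩, ⟨s - a, by omega⟩) : Fin n × Fin n) := by
      unfold SS; simp only; omega
    refine ⟨_, hc, fun τ hτ => ?_⟩
    have hτA := perm_mem_Av _ hc τ hτ
    simp only [Nat.add_sub_cancel' has] at hτ
    have hτz : (τ z : ℕ) = s := by rw [hτ]; simp [hz, sfun]
    have hτL : ∀ i, τ z < τ i ↔ (a < (i : ℕ) ∧ (i : ℕ) < a + n - s) := by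
      intro i
      rw [Fin.lt_def, hτz, hτ]
      unfold sfun
      have := i.2
      split_ifs <;> omega
    apply perm_ext_inv
    intro i j hij
    rw [noninv_iff hn τ hτA i j hij, noninv_iff hn σ hσ i j hij, ← not_lt, ← not_lt, hτL, hτL,
      hL, hL]
  by_cases hs : (σ z : ℕ) + 1 = n
  · refine ⟨0, σ z, by omega, by omega, by simp, rfl, fun i => ?_⟩
    have := (σ i).2
    rw [Fin.lt_def]; omega
  set L : Finset (Fin n) := Finset.univ.filter (fun i => σ z < σ i) with hLdef
  have hmem : ∀ i, i ∈ L ↔ σ z < σ i := by intro i; simp [hLdef]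
  have hcard : L.card = n - 1 - (σ z : ℕ) := by
    rw [← Fin.card_Ioi (σ z), ← Finset.card_map σ.toEmbedding]
    congr 1
    ext i
    simp only [Finset.mem_map_equiv, hmem, Finset.mem_Ioi, Equiv.apply_symm_apply]
  have hne : L.Nonempty := by
    rw [← Finset.card_pos, hcard]; have := (σ z).2; omega
  have hicc : L = Finset.Icc (L.min' hne) (L.max' hne) := by
    ext i
    rw [Finset.mem_Icc]
    constructor
    · intro hi; exact ⟨L.min'_le _ hi, L.le_max' _ hi⟩
    · rintro ⟨h1, h2⟩
      rcases h1.eq_or_lt with h1 | h1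
      · rw [← h1]; exact L.min'_mem hne
      rcases h2.eq_or_lt with h2 | h2
      · rw [h2]; exact L.max'_mem hne
      have m1 := (hmem _).1 (L.min'_mem hne)
      have m2 := (hmem _).1 (L.max'_mem hne)
      rw [hmem]
      by_contra hcon
      have b1 := hσ'.2 _ _ _ h1 h2
      have zm : z < L.min' hne := by
        rw [Fin.lt_def]
        have : (L.min' hne : ℕ) ≠ 0 := by
          intro h
          have : L.min' hne = z := Fin.ext h
          rw [this] at m1; exact lt_irrefl _ m1
        simp only [hz]; omega
      have b2 := hσ'.1 _ _ _ zm (h1.trans h2)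
      have : L.min' hne ≠ L.max' hne := (h1.trans h2).ne
      have : σ (L.min' hne) ≠ σ (L.max' hne) := fun h => this (σ.injective h)
      omega
  have hm0 : (L.min' hne : ℕ) ≠ 0 := by
    intro h
    have m1 := (hmem _).1 (L.min'_mem hne)
    have : L.min' hne = z := Fin.ext h
    rw [this] at m1; exact lt_irrefl _ m1
  have hle := L.min'_le_max' hne
  generalize L.min' hne = m at *
  generalize L.max' hne = M at *
  have hc2 := hcard
  rw [hicc, Fin.card_Icc] at hc2
  have hzn := (σ z).2
  have hMn := M.2
  refine ⟨m - 1, σ z, by omega, by omega, by omega, rfl, fun i => ?_⟩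
  rw [← hmem, hicc, Finset.mem_Icc, Fin.le_def, Fin.le_def]
  omega

lemma entry_order {n : ℕ} (c p : Fin n × Fin n) (hc : SS c)
    (h : sfun n c.1 (c.1 + c.2) p.1 = p.2) (hne : p ≠ c) :
    (c.1 : ℕ) < p.1 ∧ ¬ SS p ∨ (p.1 : ℕ) < c.1 ∧ SS p := by
  obtain ⟨a, v⟩ := c
  obtain ⟨i, w⟩ := p
  have hne' : ¬ ((i : ℕ) = a ∧ (w : ℕ) = v) := by
    rintro ⟨h1, h2⟩
    exact hne (Prod.ext (Fin.ext h1) (Fin.ext h2))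
  unfold SS at hc ⊢
  unfold sfun at h
  simp only at hc h ⊢
  split_ifs at h <;> omega

lemma entry_self {n : ℕ} (c : Fin n × Fin n) :
    sfun n c.1 (c.1 + c.2) c.1 = c.2 := by
  unfold sfun; simp

open Classical in
lemma card_SS (n : ℕ) (hn : 1 ≤ n) :
    (Finset.univ.filter (fun c : Fin n × Fin n => SS c)).card = n.choose 2 + 1 := by
  have h1 : (Finset.univ.filter (fun c : Fin n × Fin n => SS c)) =
      insert (⟨0, by omega⟩, ⟨n - 1, by omega⟩)
      (Finset.univ.filter (fun c : Fin n × Fin n => (c.1 : ℕ) + (c.2 : ℕ) + 1 < n)) := by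
    ext ⟨a, v⟩
    simp only [Finset.mem_filter, Finset.mem_univ, true_and, Finset.mem_insert, Prod.mk.injEq,
      Fin.ext_iff]
    simp only [SS]
    omega
  rw [h1, Finset.card_insert_of_notMem (by simp; omega)]
  congr 1
  rw [Finset.card_filter, Fintype.sum_prod_type]
  simp only
  have h2 : ∀ i : Fin n, (∑ v : Fin n, if (i : ℕ) + (v : ℕ) + 1 < n then 1 else 0)
      = n - 1 - (i : ℕ) := by
    intro i
    rw [← Finset.card_filter]
    have h3 : (Finset.univ.filter (fun v : Fin n => (i : ℕ) + (v : ℕ) + 1 < n)) =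
        Finset.Iio (⟨n - 1 - i, by omega⟩ : Fin n) := by
      ext v
      simp only [Finset.mem_filter, Finset.mem_univ, true_and, Finset.mem_Iio, Fin.lt_def]
      omega
    rw [h3, Fin.card_Iio]
  rw [Finset.sum_congr rfl (fun i _ => h2 i), Fin.sum_univ_eq_sum_range (fun i => n - 1 - i) n,
    Finset.sum_range_reflect (fun i => i) n, Finset.sum_range_id, Nat.choose_two_right]

/-- The integer matrix whose columns complete the vertices to a lattice basis. -/
noncomputable def BB {n : ℕ} (g : Fin n × Fin n → Equiv.Perm (Fin n)) :
    Matrix (Fin n × Fin n) (Fin n × Fin n) ℤ :=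
  open Classical in
  fun p c => if SS c then (if g c p.1 = p.2 then 1 else 0) else if p = c then 1 else 0

open Classical in
lemma BB_det {n : ℕ} (g : Fin n × Fin n → Equiv.Perm (Fin n))
    (hg : ∀ c, SS c → ∀ i, (g c i : ℕ) = sfun n c.1 (c.1 + c.2) i) : (BB g).det = 1 := by
  let f : Fin n × Fin n → ℕ := fun p => if SS p then n - 1 - p.1 else n
  have hdiag : ∀ c, BB g c c = 1 := by
    intro c
    unfold BB
    by_cases hc : SS c
    · rw [if_pos hc, if_pos]
      exact Fin.ext (by rw [hg c hc, entry_self])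
    · simp [hc]
  have hoff : ∀ p c, p ≠ c → BB g p c ≠ 0 → f c < f p := by
    intro p c hpc h
    unfold BB at h
    by_cases hc : SS c
    · rw [if_pos hc] at h
      have h' : g c p.1 = p.2 := by by_contra h'; simp [h'] at h
      have h2 := entry_order c p hc (by rw [← hg c hc, h']) hpc
      have := c.1.2
      have := p.1.2
      simp only [f, if_pos hc]
      split_ifs <;> simp_all <;> omega
    · simp [hc, hpc] at h
  rw [← Matrix.det_transpose]
  have hbt : (BB g).transpose.BlockTriangular f := by
    intro i j hij
    by_contra h
    rw [Matrix.transpose_apply] at h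
    by_cases hji : j = i
    · subst hji; exact lt_irrefl _ hij
    · exact absurd (hoff j i hji h) (not_lt.2 hij.le)
  rw [hbt.det]
  apply Finset.prod_eq_one
  intro k _
  have : (BB g).transpose.toSquareBlock f k = 1 := by
    ext ⟨i, hi⟩ ⟨j, hj⟩
    simp only [Matrix.toSquareBlock_def, Matrix.of_apply, Matrix.transpose_apply]
    by_cases hij : j = i
    · subst hij; simp [hdiag]
    · rw [Matrix.one_apply_ne (by simpa [Subtype.ext_iff] using fun h => hij h.symm)]
      by_contra h
      have := hoff j i hij h
      omega
  rw [this, Matrix.det_one]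

open Classical in
lemma exists_tau (n : ℕ) (hn : 1 ≤ n) : ∃ τ : Equiv.Perm (Fin n × Fin n),
    ∀ p, SS p ↔ (finProdFinEquiv (τ p) : ℕ) < n.choose 2 + 1 := by
  have hS := card_SS n hn
  have hle : n.choose 2 + 1 ≤ n * n := by
    rw [← hS]
    refine (Finset.card_le_univ _).trans ?_
    simp
  have hT : Fintype.card {p : Fin n × Fin n // (finProdFinEquiv p : ℕ) < n.choose 2 + 1} =
      n.choose 2 + 1 := by
    rw [← Fintype.card_fin (n.choose 2 + 1)]
    refine Fintype.card_congr
      { toFun := fun p => ⟨finProdFinEquiv p.1, by simpa using p.2⟩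
        invFun := fun j => ⟨finProdFinEquiv.symm ⟨j, by have := j.2; simp at this; omega⟩, by
          rw [Equiv.apply_symm_apply]; simpa using j.2⟩
        left_inv := fun p => by
          apply Subtype.ext
          simp only [Fin.eta, Equiv.symm_apply_apply]
        right_inv := fun j => by
          apply Fin.ext
          simp only [Equiv.apply_symm_apply] }
  have hS' : Fintype.card {p : Fin n × Fin n // SS p} = n.choose 2 + 1 := by
    rw [Fintype.card_subtype]; exact hS
  have e := Fintype.equivOfCardEq (hS'.trans hT.symm)
  refine ⟨e.extendSubtype, fun p => ⟨fun h => e.extendSubtype_mem p h, fun h => ?_⟩⟩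
  by_contra h'
  exact e.extendSubtype_not_mem p h' h

lemma main_aux (n : ℕ) (hn : 1 ≤ n) :
    UnimodEquiv (B123312 n)
      (convexHull ℝ (Set.range fun j : Fin (n.choose 2 + 1) =>
        fun p : Fin n × Fin n => if (finProdFinEquiv p : ℕ) = (j : ℕ) then (1 : ℝ) else 0)) ∧
    (Av123312 n).ncard = n.choose 2 + 1 ∧
    AffineIndependent ℝ (fun σ : ↥(Av123312 n) => permMatrix (σ : Equiv.Perm (Fin n))) := by
  classical
  choose! g hg using exists_perm (n := n)
  obtain ⟨τ, hτ⟩ := exists_tau n hn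
  have hdet := BB_det g hg
  have hAv : Av123312 n = g '' {c | SS c} := by
    ext σ
    constructor
    · intro hσ
      obtain ⟨c, hc, h⟩ := exists_cell hn σ hσ
      exact ⟨c, hc, h _ (hg c hc)⟩
    · rintro ⟨c, hc, rfl⟩
      exact perm_mem_Av c hc _ (hg c hc)
  have hinj : Set.InjOn g {c | SS c} := by
    intro c hc d hd hcd
    by_contra hne
    have h1 := entry_order c d hc (by rw [← hg c hc, hcd, hg d hd, entry_self]) (Ne.symm hne)
    have h2 := entry_order d c hd (by rw [← hg d hd, ← hcd, hg c hc, entry_self]) hne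
    have hc' : SS c := hc
    have hd' : SS d := hd
    simp only [hc', hd', not_true_eq_false, and_false, false_or, and_true] at h1 h2
    omega
  let C : Matrix (Fin n × Fin n) (Fin n × Fin n) ℤ := (BB g).submatrix id τ.symm
  have hCdet : IsUnit C.det := by
    simp only [C]
    rw [Matrix.det_permute', hdet, mul_one]
    exact (Equiv.Perm.sign τ.symm).isUnit
  have hAC : C⁻¹ * C = 1 := Matrix.nonsing_inv_mul _ hCdet
  have hCA : C * C⁻¹ = 1 := Matrix.mul_nonsing_inv _ hCdet
  let Ar : Matrix (Fin n × Fin n) (Fin n × Fin n) ℝ := (C⁻¹).map (fun z : ℤ => (z : ℝ))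
  let Cr : Matrix (Fin n × Fin n) (Fin n × Fin n) ℝ := C.map (fun z : ℤ => (z : ℝ))
  have hACr : Ar * Cr = 1 := by
    have := congrArg (Int.castRingHom ℝ).mapMatrix hAC
    rw [map_mul, map_one] at this
    exact this
  have hCAr : Cr * Ar = 1 := by
    have := congrArg (Int.castRingHom ℝ).mapMatrix hCA
    rw [map_mul, map_one] at this
    exact this
  have hcol : ∀ c, SS c → Cr.col (τ c) = permMatrix (g c) := by
    intro c hc
    funext p
    simp [Cr, C, Matrix.col_apply, BB, permMatrix, hc]
  have hAcol : ∀ c, SS c → Ar.mulVec (permMatrix (g c)) = Pi.single (τ c) 1 := by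
    intro c hc
    rw [← hcol c hc, ← Matrix.mulVec_single_one, Matrix.mulVec_mulVec, hACr, Matrix.one_mulVec]
  refine ⟨⟨C⁻¹, 0, ?_, ?_⟩, ?_, ?_⟩
  · have h : IsUnit (C⁻¹).det := by
      have := congrArg Matrix.det hAC
      rw [Matrix.det_mul, Matrix.det_one] at this
      exact IsUnit.of_mul_eq_one _ this
    exact Int.isUnit_iff.1 h
  · have hfun : (fun x : Fin n × Fin n → ℝ => (C⁻¹.map (fun z : ℤ => (z : ℝ))).mulVec x +
        fun i => (((0 : Fin n × Fin n → ℤ) i : ℤ) : ℝ)) = Ar.mulVecLin := by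
      funext x p
      simp [Ar]
    rw [hfun]
    have hAinj : Function.Injective Ar.mulVecLin := by
      intro x y hxy
      simp only [Matrix.mulVecLin_apply] at hxy
      have := congrArg Cr.mulVec hxy
      simpa [Matrix.mulVec_mulVec, hCAr] using this
    have himg : Ar.mulVecLin '' (permMatrix '' Av123312 n) =
        Set.range fun j : Fin (n.choose 2 + 1) =>
        fun p : Fin n × Fin n => if (finProdFinEquiv p : ℕ) = (j : ℕ) then (1 : ℝ) else 0 := by
      rw [hAv, Set.image_image, Set.image_image]
      have hs : ∀ c, SS c → ∀ p, (Pi.single (τ c) 1 : Fin n × Fin n → ℝ) p =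
          if (finProdFinEquiv p : ℕ) = (finProdFinEquiv (τ c) : ℕ) then (1 : ℝ) else 0 := by
        intro c hc p
        rw [Pi.single_apply]
        congr 1
        rw [← Fin.ext_iff, finProdFinEquiv.injective.eq_iff]
      ext x
      constructor
      · rintro ⟨c, hc, rfl⟩
        refine ⟨⟨finProdFinEquiv (τ c), (hτ c).1 hc⟩, ?_⟩
        funext p
        beta_reduce
        rw [Matrix.mulVecLin_apply, hAcol c hc, hs c hc]
      · rintro ⟨j, rfl⟩
        have hj : (j : ℕ) < n * n := by
          have h1 := card_SS n hn
          have h2 := Finset.card_le_univ (Finset.univ.filter (fun c : Fin n × Fin n => SS c))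
          rw [h1] at h2
          simp at h2
          have := j.2
          omega
        have hc : SS (τ.symm (finProdFinEquiv.symm ⟨j, hj⟩)) := by
          rw [hτ]
          simp only [Equiv.apply_symm_apply]
          exact j.2
        refine ⟨_, hc, ?_⟩
        funext p
        beta_reduce
        rw [Matrix.mulVecLin_apply, hAcol _ hc, hs _ hc]
        simp only [Equiv.apply_symm_apply]
    unfold B123312
    rw [← himg, ← LinearMap.image_convexHull]
    exact (hAinj.injOn).bijOn_image
  · rw [hAv, hinj.ncard_image, ← card_SS n hn, ← Set.ncard_coe_finset]
    congr 1
    ext c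
    simp
  · apply LinearIndependent.affineIndependent
    have hli : LinearIndependent ℝ Cr.col := by
      rw [Matrix.linearIndependent_cols_iff_isUnit]
      exact IsUnit.of_mul_eq_one _ hCAr
    have hex : ∀ σ : ↥(Av123312 n), ∃ c, SS c ∧ g c = σ := by
      intro σ
      exact hAv.subset σ.2
    choose k hk1 hk2 using hex
    have hkinj : Function.Injective (fun σ => τ (k σ)) := by
      intro a b hab
      have : k a = k b := τ.injective hab
      apply Subtype.ext
      rw [← hk2 a, ← hk2 b, this]
    have := hli.comp _ hkinj
    have heq : (Cr.col ∘ fun σ => τ (k σ)) =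
        fun σ : ↥(Av123312 n) => permMatrix (σ : Equiv.Perm (Fin n)) := by
      funext σ
      simp only [Function.comp]
      rw [hcol _ (hk1 σ), hk2]
    rw [heq] at this
    exact this

theorem stmt11 (n : ℕ) (hn : 1 ≤ n) :
    UnimodEquiv (B123312 n)
      (convexHull ℝ (Set.range fun j : Fin (n.choose 2 + 1) =>
        fun p : Fin n × Fin n => if (finProdFinEquiv p : ℕ) = (j : ℕ) then (1 : ℝ) else 0)) ∧
    (Av123312 n).ncard = n.choose 2 + 1 ∧
    AffineIndependent ℝ (fun σ : ↥(Av123312 n) => permMatrix (σ : Equiv.Perm (Fin n))) := by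
  exact main_aux n hn
end

section
/- Let Q be a finite poset with |Q| = n ≥ 1 and let ω : Q → {1, …, n} be a natural labeling, i.e. an order-preserving bijection. For each linear extension of Q, i.e. a bijection e : Q → {1, …, n} with e(q) < e(q′) whenever q < q′ in Q, let w_e = ω ∘ e^{-1} ∈ S_n and des(w_e) = #{1 ≤ i ≤ n−1 : w_e(i) > w_e(i+1)}. Let l be the maximum length of a chain in Q (a chain with m elements has length m−1). Then Q is graded (every maximal chain of Q has length l) if and only if for every integer j, #{linear extensions e of Q : des(w_e) = j} = #{linear extensions e of Q : des(w_e) = n − l − 1 − j}; i.e. the Eulerian polynomial A_Q(t) = Σ_e t^{1+des(w_e)} is palindromic. -/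
/-- Extend `w : Fin n → Fin n` to `ℕ → ℕ` (by `0` outside the range). -/
def toNatFun {n : ℕ} (w : Fin n → Fin n) : ℕ → ℕ :=
  fun i => if h : i < n then (w ⟨i, h⟩ : ℕ) else 0

/-- The number of descents of `w`: `#{1 ≤ i ≤ n-1 : w(i) > w(i+1)}` (zero-based:
positions `i ∈ {0,…,n-2}` with `w(i) > w(i+1)`). -/
def desCount {n : ℕ} (w : Fin n → Fin n) : ℕ :=
  ((Finset.range (n - 1)).filter fun i => toNatFun w (i + 1) < toNatFun w i).card

open Classical in
lemma card_strictMono (n N : ℕ) :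
    (Finset.univ.filter fun b : Fin n → Fin N => StrictMono b).card = N.choose n := by
  have h : (Finset.powersetCard n (Finset.univ : Finset (Fin N))).card = N.choose n := by
    simp
  rw [← h]
  refine Finset.card_bij (fun b _ => Finset.univ.image b) ?_ ?_ ?_
  · intro b hb
    simp only [Finset.mem_filter, Finset.mem_univ, true_and] at hb
    simp [Finset.mem_powersetCard, Finset.card_image_of_injective _ hb.injective]
  · intro b hb c hc hbc
    simp only [Finset.mem_filter, Finset.mem_univ, true_and] at hb hc
    rw [← hb.range_inj hc]
    have := congrArg (fun s : Finset (Fin N) => (s : Set (Fin N))) hbc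
    simpa using this
  · intro s hs
    simp only [Finset.mem_powersetCard] at hs
    exact ⟨s.orderEmbOfFin hs.2, by simpa using (s.orderEmbOfFin hs.2).strictMono, by simp⟩

/-- number of descents strictly before position `i` -/
def desPre {n : ℕ} (w : Fin n → Fin n) (i : ℕ) : ℕ :=
  ((Finset.range i).filter fun i => toNatFun w (i + 1) < toNatFun w i).card

lemma desPre_succ {n : ℕ} (w : Fin n → Fin n) (i : ℕ) :
    desPre w (i+1) = desPre w i + if toNatFun w (i + 1) < toNatFun w i then 1 else 0 := by
  unfold desPre
  rw [Finset.range_add_one, Finset.filter_insert]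
  split_ifs <;> simp

lemma desPre_le {n : ℕ} (w : Fin n → Fin n) (i : ℕ) : desPre w i ≤ i := by
  unfold desPre
  exact (Finset.card_filter_le _ _).trans (by simp)

lemma lexStep {k : ℕ} (w : Fin (k+1) → Fin (k+1)) (hw : Function.Injective w) (a : Fin (k+1) → ℕ) :
    StrictMono (fun i => toLex (a i, w i)) ↔
      ∀ i : Fin k, a i.castSucc + desPre w (i+1) ≤ a i.succ + desPre w i := by
  rw [Fin.strictMono_iff_lt_succ]
  refine forall_congr' fun i => ?_
  rw [desPre_succ, Prod.Lex.toLex_lt_toLex]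
  have h1 : toNatFun w (i+1) = (w i.succ : ℕ) := by
    simp [toNatFun, Fin.succ]
  have h2 : toNatFun w i = (w i.castSucc : ℕ) := by
    simp [toNatFun, Fin.castSucc, Fin.castAdd, Fin.castLE]
  have h3 : (w i.succ : ℕ) ≠ w i.castSucc := by
    intro h
    have := hw (Fin.ext h)
    simp [Fin.ext_iff] at this
  rw [h1, h2]
  simp only [Fin.lt_def]
  split_ifs <;> omega

lemma strictMono_step {k : ℕ} (b : Fin (k+1) → ℕ) :
    StrictMono b ↔ ∀ i : Fin k, b i.castSucc + 1 ≤ b i.succ := by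
  rw [Fin.strictMono_iff_lt_succ]; rfl

lemma monotone_step {k : ℕ} (b : Fin (k+1) → ℕ) :
    Monotone b ↔ ∀ i : Fin k, b i.castSucc ≤ b i.succ := by
  rw [Fin.monotone_iff_le_succ]

open Classical in
lemma card_lexMono (k M : ℕ) (w : Fin (k+1) → Fin (k+1)) (hw : Function.Injective w) :
    (Finset.univ.filter fun a : Fin (k+1) → Fin M => StrictMono (fun i => toLex (a i, w i))).card
      = (M + k - desCount w).choose (k+1) := by
  rw [← card_strictMono]
  have hd : desCount w = desPre w k := rfl
  rw [hd]
  have hdk := desPre_le w k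
  have key : ∀ a : Fin (k+1) → Fin M, StrictMono (fun i => toLex (a i, w i)) ↔
      StrictMono (fun i => toLex ((a i : ℕ), w i)) := by
    intro a
    simp only [StrictMono, Prod.Lex.toLex_lt_toLex, Fin.lt_def, Fin.ext_iff]
  -- facts about a
  have fa : ∀ a : Fin (k+1) → Fin M, StrictMono (fun i => toLex (a i, w i)) →
      StrictMono (fun i => (a i : ℕ) + i - desPre w i) := by
    intro a ha
    rw [key, lexStep w hw] at ha
    rw [strictMono_step]
    intro i
    have := ha i
    have h1 := desPre_le w i
    have h2 := desPre_le w (i+1)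
    simp only [Fin.val_castSucc, Fin.val_succ]
    omega
  have fb : ∀ b : Fin (k+1) → Fin (M + k - desPre w k), StrictMono b →
      ∀ i : Fin (k+1), (i : ℕ) ≤ b i := by
    intro b hb i
    have : StrictMono (fun i => (b i : ℕ)) := hb
    rw [strictMono_step] at this
    induction i using Fin.induction with
    | zero => simp
    | succ i ih => have := this i; simp at *; omega
  have fb2 : ∀ b : Fin (k+1) → Fin (M + k - desPre w k), StrictMono b →
      Monotone (fun i => (b i : ℕ) + desPre w i - i) := by
    intro b hb
    have h0 := fb b hb
    have : StrictMono (fun i => (b i : ℕ)) := hb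
    rw [strictMono_step] at this
    rw [monotone_step]
    intro i
    have := this i
    have := h0 i.castSucc
    have := desPre_succ w i
    simp only [Fin.val_castSucc, Fin.val_succ] at *
    split_ifs at this <;> omega
  refine Finset.card_bij' 
    (fun a ha => fun i => ⟨(a i : ℕ) + i - desPre w i, ?_⟩)
    (fun b hb => fun i => ⟨(b i : ℕ) + desPre w i - i, ?_⟩) ?_ ?_ ?_ ?_
  · simp only [Finset.mem_filter, Finset.mem_univ, true_and] at ha
    have := (fa a ha).monotone (Fin.le_last i)
    have h2 := (a (Fin.last k)).2
    simp only [Fin.val_last] at this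
    omega
  · simp only [Finset.mem_filter, Finset.mem_univ, true_and] at hb
    have := (fb2 b hb) (Fin.le_last i)
    have h2 := (b (Fin.last k)).2
    have h3 := fb b hb (Fin.last k)
    simp only [Fin.val_last] at this h3
    omega
  · intro a ha
    simp only [Finset.mem_filter, Finset.mem_univ, true_and] at ha ⊢
    exact fa a ha
  · intro b hb
    simp only [Finset.mem_filter, Finset.mem_univ, true_and] at hb ⊢
    rw [key, lexStep w hw]
    have h0 := fb b hb
    have : StrictMono (fun i => (b i : ℕ)) := hb
    rw [strictMono_step] at this
    intro i
    have := this i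
    have := h0 i.castSucc
    simp only [Fin.val_castSucc, Fin.val_succ] at *
    omega
  · intro a ha
    funext i
    ext
    have := desPre_le w i
    simp only
    omega
  · intro b hb
    simp only [Finset.mem_filter, Finset.mem_univ, true_and] at hb
    funext i
    ext
    have := desPre_le w i
    have := fb b hb i
    simp only
    omega

open Classical in
/-- The fundamental lemma of `(P,ω)`-partitions. -/
lemma card_partitions (Q : Type) [Fintype Q] [PartialOrder Q] (k : ℕ)
    (hcard : Fintype.card Q = k + 1) (σ : Q ≃ Fin (k+1)) (M : ℕ) :
    (Finset.univ.filter fun f : Q → Fin M =>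
      ∀ q q' : Q, q < q' → toLex (f q, σ q) < toLex (f q', σ q')).card =
    ∑ e ∈ Finset.univ.filter (fun e : Q ≃ Fin (k+1) => ∀ q q' : Q, q < q' → e q < e q'),
      (M + k - desCount (σ ∘ e.symm)).choose (k+1) := by
  have h1 : ∀ e : Q ≃ Fin (k+1), (M + k - desCount (σ ∘ e.symm)).choose (k+1) =
      (Finset.univ.filter fun f : Q → Fin M =>
        StrictMono (fun i => toLex (f (e.symm i), σ (e.symm i)))).card := by
    intro e
    rw [← card_lexMono k M _ (σ.injective.comp e.symm.injective)]
    refine Finset.card_bij' (fun a _ => a ∘ e) (fun f _ => f ∘ e.symm) ?_ ?_ ?_ ?_ <;>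
      simp [Function.comp_assoc]
  rw [Finset.sum_congr rfl (fun e _ => h1 e), ← Finset.card_sigma]
  symm
  refine Finset.card_bij (fun p _ => p.2) ?_ ?_ ?_
  · rintro ⟨e, f⟩ h
    simp only [Finset.mem_sigma, Finset.mem_filter, Finset.mem_univ, true_and] at h ⊢
    intro q q' hq
    simpa using h.2 (h.1 q q' hq)
  · rintro ⟨e, f⟩ h ⟨e', f'⟩ h' hff
    simp only [Finset.mem_sigma, Finset.mem_filter, Finset.mem_univ, true_and] at h h' hff
    subst hff
    have h3 := (h.2.range_inj h'.2).1 (by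
      have t : ∀ e : Q ≃ Fin (k+1), Set.range (fun i => toLex (f (e.symm i), σ (e.symm i))) = Set.range (fun q => toLex (f q, σ q)) := by
        intro e
        exact e.symm.surjective.range_comp (fun q => toLex (f q, σ q))
      rw [t, t])
    have h4 : e.symm = e'.symm := by
      ext i
      have := congrFun h3 i
      simp only [Prod.mk.injEq, EmbeddingLike.apply_eq_iff_eq] at this
      exact this.2
    have : e = e' := by rw [← e.symm_symm, h4, e'.symm_symm]
    rw [this]
  · intro f hf
    simp only [Finset.mem_filter, Finset.mem_univ, true_and] at hf
    let φ : Q → Lex (Fin M × Fin (k+1)) := fun q => toLex (f q, σ q)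
    have hφ : Function.Injective φ := by
      intro q q' h
      simp only [φ, Prod.mk.injEq, EmbeddingLike.apply_eq_iff_eq] at h
      exact h.2
    let s := Finset.univ.image φ
    have hs : s.card = k + 1 := by
      rw [Finset.card_image_of_injective _ hφ, Finset.card_univ, hcard]
    have hex : ∀ i, ∃ q, φ q = s.orderEmbOfFin hs i := by
      intro i
      have := s.orderEmbOfFin_mem hs i
      obtain ⟨q, -, hq⟩ := Finset.mem_image.1 this
      exact ⟨q, hq⟩
    choose g hg using hex
    have gi : Function.Injective g := by
      intro i j hij
      have : s.orderEmbOfFin hs i = s.orderEmbOfFin hs j := by rw [← hg, ← hg, hij]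
      exact (s.orderEmbOfFin hs).injective this
    have gb : Function.Bijective g := (Fintype.bijective_iff_injective_and_card g).2 ⟨gi, by simp [hcard]⟩
    let e := (Equiv.ofBijective g gb).symm
    have hm : StrictMono (fun i => toLex (f (e.symm i), σ (e.symm i))) := by
      have : (fun i => toLex (f (e.symm i), σ (e.symm i))) = s.orderEmbOfFin hs := by
        funext i
        rw [← hg]
        rfl
      rw [this]
      exact (s.orderEmbOfFin hs).strictMono
    refine ⟨⟨e, f⟩, ?_, rfl⟩
    simp only [Finset.mem_sigma, Finset.mem_filter, Finset.mem_univ, true_and]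
    refine ⟨?_, hm⟩
    intro q q' hq
    have := hf q q' hq
    rw [← hm.lt_iff_lt]
    simpa using this

lemma desCount_rev {k : ℕ} (w : Fin (k+1) → Fin (k+1)) (hw : Function.Injective w) :
    desCount (Fin.rev ∘ w) = k - desCount w := by
  unfold desCount
  rw [eq_comm, Nat.sub_eq_iff_eq_add' ((Finset.card_filter_le _ _).trans (by simp))]
  have h := Finset.card_filter_add_card_filter_not (s := Finset.range k) (fun i => toNatFun w (i + 1) < toNatFun w i)
  simp only [Finset.card_range] at h
  simp only [Nat.add_sub_cancel]
  conv_lhs => rw [← h]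
  congr 2
  apply Finset.filter_congr
  intro i hi
  rw [Finset.mem_range] at hi
  have h3 : (w ⟨i, by omega⟩ : ℕ) ≠ w ⟨i+1, by omega⟩ := by
    intro h
    have := hw (Fin.ext h)
    simp [Fin.ext_iff] at this
  have t1 : i < k + 1 := by omega
  have t2 : i + 1 < k + 1 := by omega
  simp only [toNatFun, t1, t2, dif_pos, Function.comp, Fin.val_rev]
  have := (w ⟨i, t1⟩).2
  have := (w ⟨i+1, t2⟩).2
  omega

section poset
variable {Q : Type} [Fintype Q] [PartialOrder Q]

/-- natural-number rank -/
noncomputable def rk (q : Q) : ℕ := (Order.height q).toNat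

variable {l : ℕ}

lemma chain_of_series (p : LTSeries Q) :
    ∃ s : Set Q, IsChain (· ≤ ·) s ∧ s.ncard = p.length + 1 := by
  refine ⟨Set.range p, p.strictMono.monotone.isChain_range, ?_⟩
  rw [← Set.image_univ, Set.ncard_image_of_injective _ p.strictMono.injective]
  simp [Set.ncard_univ]

lemma height_le_l (hl : IsGreatest {m : ℕ | ∃ s : Set Q, IsChain (· ≤ ·) s ∧ s.ncard = m + 1} l)
    (q : Q) : Order.height q ≤ l := by
  apply Order.height_le
  intro p _
  exact_mod_cast hl.2 (chain_of_series p)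

lemma coe_rk (hl : IsGreatest {m : ℕ | ∃ s : Set Q, IsChain (· ≤ ·) s ∧ s.ncard = m + 1} l)
    (q : Q) : ((rk q : ℕ) : ℕ∞) = Order.height q := by
  apply ENat.coe_toNat
  exact ne_top_of_le_ne_top (ENat.coe_ne_top l) (height_le_l hl q)

lemma rk_le (hl : IsGreatest {m : ℕ | ∃ s : Set Q, IsChain (· ≤ ·) s ∧ s.ncard = m + 1} l)
    (q : Q) : rk q ≤ l := by
  have := height_le_l hl q
  rw [← coe_rk hl] at this
  exact_mod_cast this

lemma rk_strictMono (hl : IsGreatest {m : ℕ | ∃ s : Set Q, IsChain (· ≤ ·) s ∧ s.ncard = m + 1} l) :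
    StrictMono (rk : Q → ℕ) := by
  intro q q' h
  have := Order.height_add_one_le h
  rw [← coe_rk hl, ← coe_rk hl] at this
  have : rk q + 1 ≤ rk q' := by exact_mod_cast this
  omega

lemma rk_le_of_strictMono
    (hl : IsGreatest {m : ℕ | ∃ s : Set Q, IsChain (· ≤ ·) s ∧ s.ncard = m + 1} l)
    (g : Q → ℕ) (hg : StrictMono g) (q : Q) : rk q ≤ g q := by
  have := Order.height_le_height_apply_of_strictMono g hg q
  rw [← coe_rk hl, Order.height_nat] at this
  exact_mod_cast this

lemma rk_injOn (hl : IsGreatest {m : ℕ | ∃ s : Set Q, IsChain (· ≤ ·) s ∧ s.ncard = m + 1} l)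
    {s : Set Q} (hs : IsChain (· ≤ ·) s) : Set.InjOn (rk : Q → ℕ) s := by
  intro x hx y hy hxy
  by_contra hne
  rcases hs.lt_of_le hx hy hne with h | h
  · have := rk_strictMono hl h; omega
  · have := rk_strictMono hl h; omega

lemma full_iff (hl : IsGreatest {m : ℕ | ∃ s : Set Q, IsChain (· ≤ ·) s ∧ s.ncard = m + 1} l)
    {s : Set Q} (hs : IsChain (· ≤ ·) s) : s.ncard = l + 1 ↔ ∀ k ≤ l, ∃ z ∈ s, rk z = k := by
  have hc : (rk '' s).ncard = s.ncard := Set.ncard_image_of_injOn (rk_injOn hl hs)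
  have hsub : rk '' s ⊆ ((Finset.range (l+1) : Finset ℕ) : Set ℕ) := by
    rintro _ ⟨z, _, rfl⟩
    simpa [Nat.lt_succ_iff] using rk_le hl z
  have hr : ((Finset.range (l+1) : Finset ℕ) : Set ℕ).ncard = l + 1 := by
    rw [Set.ncard_coe_finset]; simp
  constructor
  · intro h k hk
    have : rk '' s = ((Finset.range (l+1) : Finset ℕ) : Set ℕ) :=
      Set.eq_of_subset_of_ncard_le hsub (by rw [hr, hc, h])
    have hk' : k ∈ rk '' s := by rw [this]; simp; omega
    exact hk'
  · intro h
    rw [← hc, ← hr]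
    congr 1
    apply hsub.antisymm
    intro k hk
    simp at hk
    obtain ⟨z, hz, hzk⟩ := h k (by omega)
    exact ⟨z, hz, hzk⟩

lemma mem_maxChain {s : Set Q} (hs : IsMaxChain (· ≤ ·) s) {a : Q}
    (ha : ∀ b ∈ s, a ≤ b ∨ b ≤ a) : a ∈ s := by
  have h := hs.2 (hs.1.insert (a := a) fun b hb _ => ha b hb) (Set.subset_insert a s)
  rw [h]; exact Set.mem_insert a s

/-- graded implies covers raise rank by one, and maximal elements have rank l -/
lemma graded_local (hl : IsGreatest {m : ℕ | ∃ s : Set Q, IsChain (· ≤ ·) s ∧ s.ncard = m + 1} l)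
    (hg : ∀ s : Set Q, IsMaxChain (· ≤ ·) s → s.ncard = l + 1) :
    (∀ x y : Q, x ⋖ y → rk y = rk x + 1) ∧ (∀ y : Q, IsMax y → rk y = l) := by
  constructor
  · intro x y hxy
    have hc : IsChain (· ≤ ·) ({x, y} : Set Q) := IsChain.pair hxy.le
    obtain ⟨s, hs, hsub⟩ := hc.exists_maxChain
    have hf := (full_iff hl hs.1).1 (hg s hs)
    have h1 := rk_strictMono hl hxy.lt
    by_contra hne
    obtain ⟨z, hz, hzk⟩ := hf (rk x + 1) (by have := rk_le hl y; omega)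
    have hx : x ∈ s := hsub (by simp)
    have hy : y ∈ s := hsub (by simp)
    have hxz : x < z := by
      rcases hs.1.total hx hz with h | h
      · exact lt_of_le_of_ne h (by rintro rfl; omega)
      · have := (rk_strictMono hl).monotone h; omega
    have hzy : z < y := by
      rcases hs.1.total hz hy with h | h
      · exact lt_of_le_of_ne h (by rintro rfl; omega)
      · have := (rk_strictMono hl).monotone h; omega
    exact hxy.2 hxz hzy
  · intro y hy
    have hc : IsChain (· ≤ ·) ({y} : Set Q) := by
      exact Set.subsingleton_singleton.isChain
    obtain ⟨s, hs, hsub⟩ := hc.exists_maxChain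
    have hf := (full_iff hl hs.1).1 (hg s hs)
    obtain ⟨z, hz, hzk⟩ := hf l le_rfl
    have hys : y ∈ s := hsub (by simp)
    have : z ≤ y := by
      rcases hs.1.total hz hys with h | h
      · exact h
      · exact hy h
    have := (rk_strictMono hl).monotone this
    have := rk_le hl y
    omega

lemma local_graded (hl : IsGreatest {m : ℕ | ∃ s : Set Q, IsChain (· ≤ ·) s ∧ s.ncard = m + 1} l)
    [Nonempty Q]
    (h1 : ∀ x y : Q, x ⋖ y → rk y = rk x + 1) (h2 : ∀ y : Q, IsMax y → rk y = l) :
    ∀ s : Set Q, IsMaxChain (· ≤ ·) s → s.ncard = l + 1 := by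
  intro s hs
  rw [full_iff hl hs.1]
  have hne : s.Nonempty := by
    rw [Set.nonempty_iff_ne_empty]
    rintro rfl
    obtain ⟨q⟩ := ‹Nonempty Q›
    exact absurd (mem_maxChain hs (a := q) (by simp)) (by simp)
  intro k hk
  induction hk using Nat.decreasingInduction with
  | self =>
    obtain ⟨t, ht, htm⟩ := s.toFinite.exists_maximal hne
    refine ⟨t, ht, h2 t ?_⟩
    intro b hb
    have : b ∈ s := mem_maxChain hs (by
      intro c hc
      right
      rcases hs.1.total hc ht with h | h
      · exact h.trans hb
      · exact (htm hc h).trans hb)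
    exact htm this hb
  | of_succ k hk ih =>
    obtain ⟨z, hz, hzk⟩ := ih
    by_cases hb : (s ∩ Set.Iio z).Nonempty
    · obtain ⟨t, ⟨ht, htz⟩, htm⟩ := (s ∩ Set.Iio z).toFinite.exists_maximal hb
      refine ⟨t, ht, ?_⟩
      have hc : t ⋖ z := by
        refine ⟨htz, fun c htc hcz => ?_⟩
        have : c ∈ s := mem_maxChain hs (by
          intro d hd
          rcases hs.1.total hz hd with h | h
          · left; exact hcz.le.trans h
          · rcases h.eq_or_lt with rfl | h
            · left; exact hcz.le
            right
            rcases hs.1.total hd ht with h' | h'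
            · exact h'.trans htc.le
            · exact (htm ⟨hd, h⟩ h').trans htc.le)
        exact absurd (htm ⟨this, hcz⟩ htc.le) (not_le_of_gt htc)
      have := h1 t z hc
      omega
    · exfalso
      have hmin : IsMin z := by
        intro b hbz
        rcases hbz.eq_or_lt with rfl | hlt
        · exact le_rfl
        exfalso
        apply hb
        refine ⟨b, mem_maxChain hs ?_, hlt⟩
        intro c hc
        left
        rcases hs.1.total hz hc with h | h
        · exact hbz.trans h
        · rcases h.eq_or_lt with rfl | h
          · exact hbz
          exact absurd ⟨c, hc, h⟩ hb
      have := Order.height_eq_zero.2 hmin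
      rw [← coe_rk hl, hzk] at this
      simp at this

/-- number of order-preserving maps to an `M`-chain -/
noncomputable def weakSet (Q : Type) [Fintype Q] [PartialOrder Q] (M : ℕ) : Finset (Q → Fin M) :=
  by classical exact Finset.univ.filter fun f => ∀ q q' : Q, q < q' → f q ≤ f q'

/-- number of strictly order-preserving maps to an `M`-chain -/
noncomputable def strictSet (Q : Type) [Fintype Q] [PartialOrder Q] (M : ℕ) : Finset (Q → Fin M) :=
  by classical exact Finset.univ.filter fun f => ∀ q q' : Q, q < q' → f q < f q'

lemma mem_weakSet {M : ℕ} (f : Q → Fin M) : f ∈ weakSet Q M ↔ ∀ q q' : Q, q < q' → f q ≤ f q' := by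
  simp [weakSet]

lemma mem_strictSet {M : ℕ} (f : Q → Fin M) :
    f ∈ strictSet Q M ↔ ∀ q q' : Q, q < q' → f q < f q' := by
  simp [strictSet]

/-- shift by rank -/
noncomputable def shiftMap
    (hl : IsGreatest {m : ℕ | ∃ s : Set Q, IsChain (· ≤ ·) s ∧ s.ncard = m + 1} l) (M : ℕ)
    (f : Q → Fin M) : Q → Fin (M + l) :=
  fun q => ⟨f q + rk q, by have := rk_le hl q; have := (f q).2; omega⟩

lemma shiftMap_mem
    (hl : IsGreatest {m : ℕ | ∃ s : Set Q, IsChain (· ≤ ·) s ∧ s.ncard = m + 1} l) (M : ℕ)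
    (f : Q → Fin M) (hf : f ∈ weakSet Q M) : shiftMap hl M f ∈ strictSet Q (M + l) := by
  rw [mem_weakSet] at hf
  rw [mem_strictSet]
  intro q q' h
  have h1 := hf q q' h
  have h2 := rk_strictMono hl h
  simp only [shiftMap, Fin.lt_def, Fin.le_def] at *
  omega

lemma shiftMap_inj
    (hl : IsGreatest {m : ℕ | ∃ s : Set Q, IsChain (· ≤ ·) s ∧ s.ncard = m + 1} l) (M : ℕ) :
    Function.Injective (shiftMap hl M) := by
  intro f g h
  funext q
  have := congrFun h q
  simp only [shiftMap, Fin.ext_iff] at *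
  omega

lemma card_of_graded
    (hl : IsGreatest {m : ℕ | ∃ s : Set Q, IsChain (· ≤ ·) s ∧ s.ncard = m + 1} l)
    (hg : ∀ s : Set Q, IsMaxChain (· ≤ ·) s → s.ncard = l + 1) (M : ℕ) :
    (weakSet Q M).card = (strictSet Q (M + l)).card := by
  classical
  obtain ⟨h1, h2⟩ := graded_local hl hg
  refine Finset.card_bij (fun f _ => shiftMap hl M f) (fun f hf => shiftMap_mem hl M f hf)
    (fun f _ g _ h => shiftMap_inj hl M h) ?_
  intro g hg
  rw [mem_strictSet] at hg
  have hge : ∀ q, rk q ≤ g q :=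
    rk_le_of_strictMono hl (fun q => (g q : ℕ)) (fun q q' h => hg q q' h)
  let _ : DecidableLE Q := Classical.decRel _
  let _ : DecidableLT Q := Classical.decRel _
  let _ : LocallyFiniteOrder Q := Fintype.toLocallyFiniteOrder
  have hm : Monotone (fun q => (g q : ℕ) - rk q) := by
    rw [monotone_iff_forall_covBy]
    intro a b hab
    have := h1 a b hab
    have := hg a b hab.lt
    rw [Fin.lt_def] at this
    have := hge a
    change (g a : ℕ) - rk a ≤ (g b : ℕ) - rk b
    omega
  have hlt : ∀ q, (g q : ℕ) - rk q < M := by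
    intro q
    obtain ⟨m, hqm, hm'⟩ := Finite.exists_le_maximal (p := fun _ : Q => True) (a := q) trivial
    have hmax : IsMax m := fun b hb => hm'.2 trivial hb
    have := hm hqm
    have := h2 m hmax
    have := (g m).2
    have := hge m
    simp only at *
    omega
  refine ⟨fun q => ⟨(g q : ℕ) - rk q, hlt q⟩, ?_, ?_⟩
  · rw [mem_weakSet]
    intro q q' h
    exact hm h.le
  · funext q
    have := hge q
    simp only [shiftMap, Fin.ext_iff]
    omega

lemma graded_of_card
    (hl : IsGreatest {m : ℕ | ∃ s : Set Q, IsChain (· ≤ ·) s ∧ s.ncard = m + 1} l) [Nonempty Q]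
    (hc : (weakSet Q 2).card = (strictSet Q (2 + l)).card) :
    ∀ s : Set Q, IsMaxChain (· ≤ ·) s → s.ncard = l + 1 := by
  classical
  have hsurj : ∀ g ∈ strictSet Q (2 + l), ∃ f ∈ weakSet Q 2, shiftMap hl 2 f = g := by
    have := Finset.eq_of_subset_of_card_le
      (s := (weakSet Q 2).image (shiftMap hl 2)) (t := strictSet Q (2 + l))
      (by
        intro g hg
        obtain ⟨f, hf, rfl⟩ := Finset.mem_image.1 hg
        exact shiftMap_mem hl 2 f hf)
      (by rw [Finset.card_image_of_injective _ (shiftMap_inj hl 2), hc])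
    intro g hg
    rw [← this] at hg
    exact Finset.mem_image.1 hg
  have hr := rk_strictMono hl
  have hrl := rk_le hl
  apply local_graded hl
  · intro x y hxy
    by_contra hne
    have h1 := hr hxy.lt
    obtain ⟨f, hf, hfg⟩ := hsurj (fun q => ⟨rk q + (if x ≤ q ∧ q ≠ y then 1 else 0), by
        have := hrl q
        split_ifs <;> omega⟩) (by
      rw [mem_strictSet]
      intro q q' h
      have h2 := hr h
      rw [Fin.lt_def]
      simp only
      by_cases hq : x ≤ q ∧ q ≠ y
      · by_cases hq' : x ≤ q' ∧ q' ≠ y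
        · rw [if_pos hq, if_pos hq']; omega
        · have hy : q' = y := by
            by_contra hh
            exact hq' ⟨hq.1.trans h.le, hh⟩
          subst hy
          have hx : x = q := by
            rcases hq.1.eq_or_lt with hh | hh
            · exact hh
            · exact absurd h (hxy.2 hh)
          subst hx
          rw [if_pos hq, if_neg hq']
          omega
      · rw [if_neg hq]
        omega)
    rw [mem_weakSet] at hf
    have := hf x y hxy.lt
    have e1 := congrFun hfg x
    have e2 := congrFun hfg y
    have hxy' := hxy.lt.ne
    simp only [shiftMap, Fin.ext_iff] at e1 e2
    rw [if_pos ⟨le_rfl, hxy'⟩] at e1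
    rw [if_neg (fun h => h.2 rfl)] at e2
    rw [Fin.le_def] at this
    omega
  · intro y hy
    by_contra hne
    have h1 := hrl y
    obtain ⟨f, hf, hfg⟩ := hsurj (fun q => ⟨rk q + (if q = y then 2 else 0), by
        have := hrl q
        split_ifs with h
        · subst h; omega
        · omega⟩) (by
      rw [mem_strictSet]
      intro q q' h
      have h2 := hr h
      rw [Fin.lt_def]
      simp only
      have : q ≠ y := by
        rintro rfl
        exact absurd h (hy.not_lt)
      rw [if_neg this]
      omega)
    have e2 := congrFun hfg y
    simp [shiftMap, Fin.ext_iff] at e2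
    have := (f y).2
    omega

lemma strict_empty
    (hl : IsGreatest {m : ℕ | ∃ s : Set Q, IsChain (· ≤ ·) s ∧ s.ncard = m + 1} l) :
    (strictSet Q l).card = 0 := by
  rw [Finset.card_eq_zero, Finset.eq_empty_iff_forall_notMem]
  intro f hf
  rw [mem_strictSet] at hf
  obtain ⟨s, hs, hsc⟩ := hl.1
  have hi : Set.InjOn f s := by
    intro x hx y hy hxy
    by_contra hne
    rcases hs.lt_of_le hx hy hne with h | h
    · exact absurd (hf _ _ h) (by simp [hxy])
    · exact absurd (hf _ _ h) (by simp [hxy])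
  have h1 := Set.ncard_image_of_injOn hi
  have h2 := Set.ncard_le_ncard (Set.subset_univ (f '' s))
  simp [Set.ncard_univ] at h2
  omega

end poset

/-- counting number -/
noncomputable def hnum {Q : Type} [PartialOrder Q] {n : ℕ} (ω : Q ≃ Fin n) (j : ℤ) : ℕ :=
  Set.ncard {e : Q ≃ Fin n |
            (∀ q q' : Q, q < q' → e q < e q') ∧ (desCount (ω ∘ e.symm) : ℤ) = j}

lemma desCount_le {k : ℕ} (w : Fin (k+1) → Fin (k+1)) : desCount w ≤ k := desPre_le w k

open Classical in
lemma sum_hnum {Q : Type} [Fintype Q] [PartialOrder Q] {k : ℕ} (ω : Q ≃ Fin (k+1)) (F : ℕ → ℕ) :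
    ∑ e ∈ Finset.univ.filter (fun e : Q ≃ Fin (k+1) => ∀ q q' : Q, q < q' → e q < e q'),
      F (desCount (ω ∘ e.symm)) = ∑ d ∈ Finset.range (k+1), hnum ω d * F d := by
  rw [← Finset.sum_fiberwise_of_maps_to (t := Finset.range (k+1))
    (g := fun e : Q ≃ Fin (k+1) => desCount (ω ∘ e.symm))
    (fun e _ => by have := desCount_le (ω ∘ e.symm); simp; omega)]
  refine Finset.sum_congr rfl fun d _ => ?_
  rw [Finset.sum_congr rfl (g := fun _ => F d) (by
    intro e he
    rw [Finset.mem_filter] at he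
    rw [he.2]), Finset.sum_const, smul_eq_mul]
  congr 1
  rw [hnum, ← Set.ncard_coe_finset]
  congr 1
  ext e
  simp

lemma weak_formula {Q : Type} [Fintype Q] [PartialOrder Q] {k : ℕ}
    (hcard : Fintype.card Q = k + 1) (ω : Q ≃ Fin (k+1))
    (hω : ∀ q q' : Q, q < q' → ω q < ω q') (M : ℕ) :
    (weakSet Q M).card = ∑ d ∈ Finset.range (k+1), hnum ω d * (M + k - d).choose (k+1) := by
  classical
  rw [← sum_hnum ω (fun d => (M + k - d).choose (k+1)), ← card_partitions Q k hcard ω M]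
  congr 1
  ext f
  simp only [mem_weakSet, Finset.mem_filter, Finset.mem_univ, true_and, Prod.Lex.toLex_lt_toLex]
  refine forall_congr' fun q => forall_congr' fun q' => forall_congr' fun h => ?_
  have := hω q q' h
  simp [this, le_iff_lt_or_eq]

lemma strict_formula {Q : Type} [Fintype Q] [PartialOrder Q] {k : ℕ}
    (hcard : Fintype.card Q = k + 1) (ω : Q ≃ Fin (k+1))
    (hω : ∀ q q' : Q, q < q' → ω q < ω q') (M : ℕ) :
    (strictSet Q M).card = ∑ d ∈ Finset.range (k+1), hnum ω d * (M + d).choose (k+1) := by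
  classical
  rw [← sum_hnum ω (fun d => (M + d).choose (k+1))]
  have h := card_partitions Q k hcard (ω.trans Fin.revPerm) M
  have h2 : ∀ e : Q ≃ Fin (k+1), M + k - desCount ((ω.trans Fin.revPerm) ∘ e.symm) =
      M + desCount (ω ∘ e.symm) := by
    intro e
    have h3 := desCount_rev (ω ∘ e.symm) (ω.injective.comp e.symm.injective)
    have h4 : ((ω.trans Fin.revPerm) ∘ e.symm : Fin (k+1) → Fin (k+1)) = Fin.rev ∘ (ω ∘ e.symm) := rfl
    have := desCount_le (ω ∘ e.symm)
    rw [h4, h3]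
    omega
  simp only [h2] at h
  rw [← h]
  congr 1
  ext f
  simp only [mem_strictSet, Finset.mem_filter, Finset.mem_univ, true_and, Prod.Lex.toLex_lt_toLex]
  refine forall_congr' fun q => forall_congr' fun q' => forall_congr' fun h => ?_
  have := hω q q' h
  simp [this.le]

lemma triangular (n K : ℕ) (hK : K ≤ n) (a b : ℕ → ℕ)
    (h : ∀ M, ∑ d ∈ Finset.range K, a d * (M + n - 1 - d).choose n =
      ∑ d ∈ Finset.range K, b d * (M + n - 1 - d).choose n) : ∀ d < K, a d = b d := by
  intro d
  induction d using Nat.strong_induction_on with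
  | _ d ih =>
    intro hd
    have hM := h (d + 1)
    have e : ∀ c : ℕ → ℕ, ∑ i ∈ Finset.range K, c i * (d + 1 + n - 1 - i).choose n =
        ∑ i ∈ Finset.range d, c i * (d + 1 + n - 1 - i).choose n + c d := by
      intro c
      rw [← Finset.sum_subset (Finset.range_subset_range.2 (show d + 1 ≤ K from hd)),
        Finset.sum_range_succ]
      · congr 1
        have : d + 1 + n - 1 - d = n := by omega
        simp [this]
      · intro i hi hi'
        simp at hi hi'
        rw [Nat.choose_eq_zero_of_lt (by omega), mul_zero]
    rw [e, e, Finset.sum_congr rfl (fun i hi => by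
      rw [ih i (Finset.mem_range.1 hi) ((Finset.mem_range.1 hi).trans hd)])] at hM
    omega

theorem stmt17 (Q : Type) [Fintype Q] [PartialOrder Q] (n : ℕ) (hn : 1 ≤ n)
    (hcard : Fintype.card Q = n)
    -- ω is a natural labeling: an order-preserving bijection Q → {1,…,n}
    (ω : Q ≃ Fin n) (hω : ∀ q q' : Q, q < q' → ω q < ω q')
    -- l is the maximum length of a chain in Q (a chain with m elements has length m-1)
    (l : ℕ)
    (hl : IsGreatest {m : ℕ | ∃ s : Set Q, IsChain (· ≤ ·) s ∧ s.ncard = m + 1} l) :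
    -- Q is graded (every maximal chain has length l) iff the Eulerian polynomial
    -- Σ_e t^{1+des(w_e)}, summed over linear extensions e, is palindromic:
    -- #{e : des(w_e) = j} = #{e : des(w_e) = n - l - 1 - j} for every integer j
    (∀ s : Set Q, IsMaxChain (· ≤ ·) s → s.ncard = l + 1) ↔
      ∀ j : ℤ,
        Set.ncard {e : Q ≃ Fin n |
            (∀ q q' : Q, q < q' → e q < e q') ∧ (desCount (ω ∘ e.symm) : ℤ) = j} =
        Set.ncard {e : Q ≃ Fin n |
            (∀ q q' : Q, q < q' → e q < e q') ∧
              (desCount (ω ∘ e.symm) : ℤ) = (n : ℤ) - l - 1 - j} := by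
  obtain ⟨k, rfl⟩ : ∃ k, n = k + 1 := ⟨n - 1, by omega⟩
  change _ ↔ ∀ j : ℤ, hnum ω j = hnum ω (((k + 1 : ℕ) : ℤ) - l - 1 - j)
  have : Nonempty Q := ⟨ω.symm 0⟩
  have hlk : l ≤ k := by
    obtain ⟨s, _, hs⟩ := hl.1
    have := Set.ncard_le_ncard (Set.subset_univ s)
    rw [Set.ncard_univ, Nat.card_eq_fintype_card] at this
    omega
  -- vanishing
  have hneg : ∀ j : ℤ, j < 0 → hnum ω j = 0 := by
    intro j hj
    rw [hnum]
    rw [← Set.ncard_empty (Q ≃ Fin (k+1))]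
    congr 1
    ext e
    simp only [Set.mem_setOf_eq, Set.mem_empty_iff_false, iff_false]
    rintro ⟨_, h⟩
    omega
  have hbig : ∀ d : ℕ, k < d + l → hnum ω d = 0 := by
    intro d hd
    by_cases hdk : d < k + 1
    · have h0 := strict_empty hl
      rw [strict_formula hcard ω hω, Finset.sum_eq_zero_iff] at h0
      have := h0 d (Finset.mem_range.2 hdk)
      rcases mul_eq_zero.1 this with h | h
      · exact h
      · rw [Nat.choose_eq_zero_iff] at h
        omega
    · rw [hnum]
      rw [← Set.ncard_empty (Q ≃ Fin (k+1))]
      congr 1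
      ext e
      simp only [Set.mem_setOf_eq, Set.mem_empty_iff_false, iff_false]
      rintro ⟨_, h⟩
      have := desCount_le (ω ∘ e.symm)
      omega
  set K := k + 1 - l with hK
  have trunc : ∀ F : ℕ → ℕ, ∑ d ∈ Finset.range (k+1), hnum ω d * F d =
      ∑ d ∈ Finset.range K, hnum ω d * F d := by
    intro F
    symm
    apply Finset.sum_subset (Finset.range_subset_range.2 (by omega))
    intro d _ hd
    simp only [Finset.mem_range] at hd
    rw [hbig d (by omega), zero_mul]
  have hweak : ∀ M, (weakSet Q M).card =
      ∑ d ∈ Finset.range K, hnum ω d * (M + (k + 1) - 1 - d).choose (k+1) := by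
    intro M
    rw [weak_formula hcard ω hω, trunc (fun d => (M + k - d).choose (k+1))]
    rfl
  have hstrict : ∀ M, (strictSet Q (M + l)).card =
      ∑ d ∈ Finset.range K, hnum ω ((K - 1 - d : ℕ)) * (M + (k + 1) - 1 - d).choose (k+1) := by
    intro M
    rw [strict_formula hcard ω hω, trunc (fun d => (M + l + d).choose (k+1)),
      ← Finset.sum_range_reflect]
    refine Finset.sum_congr rfl fun d hd => ?_
    rw [Finset.mem_range] at hd
    congr 2
    omega
  have hpal : (∀ j : ℤ, hnum ω j = hnum ω (((k + 1 : ℕ) : ℤ) - l - 1 - j)) ↔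
      ∀ d < K, hnum ω d = hnum ω ((K - 1 - d : ℕ)) := by
    constructor
    · intro h d hd
      rw [h d]
      congr 1
      omega
    · intro h j
      rcases lt_or_ge j 0 with hj | hj
      · rw [hneg j hj]
        obtain ⟨d, hd⟩ : ∃ d : ℕ, ((k + 1 : ℕ) : ℤ) - l - 1 - j = d :=
          ⟨(((k + 1 : ℕ) : ℤ) - l - 1 - j).toNat, by omega⟩
        rw [hd, hbig d (by omega)]
      · obtain ⟨d, rfl⟩ := Int.eq_ofNat_of_zero_le hj
        by_cases hdK : d < K
        · rw [h d hdK]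
          congr 1
          omega
        · rw [hbig d (by omega), hneg _ (by omega)]
  rw [hpal]
  constructor
  · intro hg
    apply triangular (k + 1) K (by omega) (fun d => hnum ω d) (fun d => hnum ω ((K - 1 - d : ℕ)))
    intro M
    rw [← hweak, ← hstrict]
    exact card_of_graded hl hg M
  · intro h
    apply graded_of_card hl
    rw [hweak, hstrict]
    refine Finset.sum_congr rfl fun d hd => ?_
    rw [h d (Finset.mem_range.1 hd)]
end

section
/- For all n ≥ 1, with k = ⌈n/2⌉: the affine span of {M_σ : σ ∈ Av_n(132,312)} in ℝ^{n×n} has dimension binom(n,2), and the affine span of {M_σ : σ ∈ AltAv_n(123)} in ℝ^{n×n} has dimension binom(k,2); that is, dim B_n(132,312) = binom(n,2) and dim B̃_n(123) = binom(⌈n/2⌉,2). -/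
/-- The pattern 132. -/
def p132 : Equiv.Perm (Fin 3) := Equiv.swap 1 2
/-- `Av_n(132,312)`. -/
def Av132312 (n : ℕ) : Set (Equiv.Perm (Fin n)) :=
  {σ : Equiv.Perm (Fin n) | ¬ containsPattern σ p132 ∧ ¬ containsPattern σ p312}

/-- `σ` is alternating (up-down): zero-based, `σ(j) < σ(j+1)` for even `j` and
`σ(j) > σ(j+1)` for odd `j`. -/
def Alternating {n : ℕ} (σ : Equiv.Perm (Fin n)) : Prop :=
  ∀ (j : ℕ) (h : j + 1 < n),
    (Even j → σ ⟨j, by omega⟩ < σ ⟨j + 1, h⟩) ∧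
    (Odd j → σ ⟨j + 1, h⟩ < σ ⟨j, by omega⟩)

/-- `AltAv_n(123)`: alternating permutations avoiding 123. -/
def AltAv123 (n : ℕ) : Set (Equiv.Perm (Fin n)) :=
  {σ : Equiv.Perm (Fin n) | Alternating σ ∧ ¬ containsPattern σ p123}

open Finset

namespace BirkhoffAux

lemma contains132_iff {n : ℕ} (σ : Equiv.Perm (Fin n)) :
    containsPattern σ p132 ↔ ∃ p q r : Fin n, p < q ∧ q < r ∧ σ p < σ r ∧ σ r < σ q := by
  constructor
  · rintro ⟨f, hf, h⟩
    refine ⟨f 0, f 1, f 2, hf (by decide), hf (by decide), (h 0 2).2 (by decide),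
      (h 2 1).2 (by decide)⟩
  · rintro ⟨p, q, r, h1, h2, h3, h4⟩
    refine ⟨![p, q, r], ?_, ?_⟩
    · intro a b hab
      fin_cases a <;> fin_cases b <;> simp at hab ⊢ <;> omega
    · intro a b
      fin_cases a <;> fin_cases b <;> simp [p132, Equiv.swap_apply_def] <;> omega

lemma contains312_iff {n : ℕ} (σ : Equiv.Perm (Fin n)) :
    containsPattern σ p312 ↔ ∃ p q r : Fin n, p < q ∧ q < r ∧ σ q < σ r ∧ σ r < σ p := by
  have e0 : p312 0 = 2 := by decide
  have e1 : p312 1 = 0 := by decide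
  have e2 : p312 2 = 1 := by decide
  constructor
  · rintro ⟨f, hf, h⟩
    refine ⟨f 0, f 1, f 2, hf (by decide), hf (by decide), (h 1 2).2 (by decide),
      (h 2 0).2 (by decide)⟩
  · rintro ⟨p, q, r, h1, h2, h3, h4⟩
    refine ⟨![p, q, r], ?_, ?_⟩
    · intro a b hab
      fin_cases a <;> fin_cases b <;> simp at hab ⊢ <;> omega
    · intro a b
      fin_cases a <;> fin_cases b <;> simp [e0, e1, e2] <;> omega

lemma contains123_iff {n : ℕ} (σ : Equiv.Perm (Fin n)) :
    containsPattern σ p123 ↔ ∃ p q r : Fin n, p < q ∧ q < r ∧ σ p < σ q ∧ σ q < σ r := by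
  constructor
  · rintro ⟨f, hf, h⟩
    refine ⟨f 0, f 1, f 2, hf (by decide), hf (by decide), (h 0 1).2 (by decide),
      (h 1 2).2 (by decide)⟩
  · rintro ⟨p, q, r, h1, h2, h3, h4⟩
    refine ⟨![p, q, r], ?_, ?_⟩
    · intro a b hab
      fin_cases a <;> fin_cases b <;> simp at hab ⊢ <;> omega
    · intro a b
      fin_cases a <;> fin_cases b <;> simp [p123] <;> omega

/-- Build a permutation from an injective function on naturals. -/
lemma exists_perm (n : ℕ) (f : ℕ → ℕ) (hf : ∀ p < n, f p < n)
    (hi : ∀ p < n, ∀ q < n, f p = f q → p = q) :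
    ∃ σ : Equiv.Perm (Fin n), ∀ p : Fin n, (σ p : ℕ) = f p := by
  let g : Fin n → Fin n := fun p => ⟨f p, hf p p.2⟩
  have hg : Function.Injective g := by
    intro p q h
    exact Fin.ext (hi p p.2 q q.2 (by simpa [g] using h))
  exact ⟨Equiv.ofBijective g (Finite.injective_iff_bijective.1 hg), fun p => rfl⟩

/-- An affine relation on the vertices is a linear relation on the direction space. -/
lemma rel {n : ℕ} {S : Set (Equiv.Perm (Fin n))} (ψ : (Fin n × Fin n → ℝ) →ₗ[ℝ] ℝ) (c : ℝ)
    (h : ∀ σ ∈ S, ψ (permMatrix σ) = c) :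
    ∀ v ∈ vectorSpan ℝ (permMatrix '' S), ψ v = 0 := by
  have : vectorSpan ℝ (permMatrix '' S) ≤ LinearMap.ker ψ := by
    rw [vectorSpan_def, Submodule.span_le]
    rintro _ ⟨_, ⟨σ, hσ, rfl⟩, _, ⟨τ, hτ, rfl⟩, rfl⟩
    simp [h σ hσ, h τ hτ]
  exact fun v hv => this hv

lemma finrank_of {E : Type*} [AddCommGroup E] [Module ℝ E] (N : ℕ) (V : Submodule ℝ E)
    (φ : E →ₗ[ℝ] ((Σ j : Fin N, Fin j) → ℝ))
    (inj : ∀ v ∈ V, φ v = 0 → v = 0)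
    (surj : ∀ t, Pi.single t (1 : ℝ) ∈ V.map φ) :
    Module.finrank ℝ V = N.choose 2 := by
  have hb : Function.Bijective (φ.domRestrict V) := by
    constructor
    · rw [injective_iff_map_eq_zero]
      rintro ⟨v, hv⟩ h
      exact Subtype.ext (inj v hv h)
    · rw [← LinearMap.range_eq_top, LinearMap.range_domRestrict, eq_top_iff,
        ← (Pi.basisFun ℝ _).span_eq, Submodule.span_le]
      rintro _ ⟨t, rfl⟩
      rw [Pi.basisFun_apply]
      exact surj t
  rw [(LinearEquiv.ofBijective _ hb).finrank_eq, Module.finrank_fintype_fun_eq_card]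
  simp only [Fintype.card_sigma, Fintype.card_fin]
  rw [Fin.sum_univ_eq_sum_range (fun i => i) N, Finset.sum_range_id, Nat.choose_two_right]

/-! ### Part one -/

lemma mem_Av {n : ℕ} {σ : Equiv.Perm (Fin n)} :
    σ ∈ Av132312 n ↔ ∀ p q r : Fin n, p < r → q < r → σ p < σ r → σ r < σ q → False := by
  simp only [Av132312, Set.mem_ofPred_eq, contains132_iff, contains312_iff]
  constructor
  · rintro ⟨h1, h2⟩ p q r hp hq h3 h4
    rcases lt_trichotomy p q with h | h | h
    · exact h1 ⟨p, q, r, h, hq, h3, h4⟩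
    · subst h; exact absurd (h3.trans h4) (lt_irrefl _)
    · exact h2 ⟨q, p, r, h, hp, h3, h4⟩
  · intro h
    constructor
    · rintro ⟨p, q, r, h1, h2, h3, h4⟩
      exact h p q r (h1.trans h2) h2 h3 h4
    · rintro ⟨p, q, r, h1, h2, h3, h4⟩
      exact h q p r h2 (h1.trans h2) h3 h4

lemma Av_residue_inj {n : ℕ} {σ : Equiv.Perm (Fin n)} (hσ : σ ∈ Av132312 n) (m : ℕ)
    (p r : Fin n) (hp : (p : ℕ) < m) (hr : (r : ℕ) < m) (hlt : σ p < σ r)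
    (h : (σ p : ℕ) % m = (σ r : ℕ) % m) : False := by
  rw [mem_Av] at hσ
  have hge : (σ p : ℕ) + m ≤ σ r := by
    have h1 : m ∣ (σ r : ℕ) - σ p := (Nat.modEq_iff_dvd' (le_of_lt hlt)).1 h
    have h2 := Nat.le_of_dvd (by have : (σ p : ℕ) < σ r := hlt
                                 omega) h1
    have : (σ p : ℕ) < σ r := hlt
    omega
  have hcard : (Finset.Icc (σ p) (σ r)).card ≤ (Finset.range m).card := by
    refine Finset.card_le_card_of_injOn (fun x => ((σ.symm x : Fin n) : ℕ)) ?_ ?_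
    · intro x hx
      simp only [Finset.coe_Icc, Set.mem_Icc] at hx
      simp only [Finset.coe_range, Set.mem_Iio]
      by_contra hcon
      push Not at hcon
      obtain ⟨s, rfl⟩ := σ.surjective x
      simp only [Equiv.symm_apply_apply] at hcon
      refine hσ p r s (Fin.lt_def.2 (by omega)) (Fin.lt_def.2 (by omega)) ?_ ?_
      · refine lt_of_le_of_ne hx.1 (fun he => ?_)
        have := σ.injective he
        subst this; omega
      · refine lt_of_le_of_ne hx.2 (fun he => ?_)
        have := σ.injective he
        subst this; omega
    · intro x _ y _ hxy
      exact σ.symm.injective (Fin.ext hxy)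
  rw [Fin.card_Icc, Finset.card_range] at hcard
  omega

lemma Av_residue {n : ℕ} {σ : Equiv.Perm (Fin n)} (hσ : σ ∈ Av132312 n) (m c : ℕ)
    (hm : m ≤ n) (hc : c < m) :
    ∃ l : Fin n, (l : ℕ) < m ∧ (σ l : ℕ) % m = c ∧
      ∀ l' : Fin n, (l' : ℕ) < m → (σ l' : ℕ) % m = c → l' = l := by
  have hinj : ∀ p r : Fin n, (p : ℕ) < m → (r : ℕ) < m →
      (σ p : ℕ) % m = (σ r : ℕ) % m → p = r := by
    intro p r hp hr h
    rcases lt_trichotomy (σ p) (σ r) with h1 | h1 | h1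
    · exact (Av_residue_inj hσ m p r hp hr h1 h).elim
    · exact σ.injective h1
    · exact (Av_residue_inj hσ m r p hr hp h1 h.symm).elim
  let g : Fin m → Fin m := fun l => ⟨(σ ⟨l, by omega⟩ : ℕ) % m, Nat.mod_lt _ (by omega)⟩
  have hg : Function.Injective g := by
    intro a b hab
    have := hinj ⟨a, by omega⟩ ⟨b, by omega⟩ a.2 b.2 (by simpa [g] using hab)
    exact Fin.ext (by simpa using this)
  obtain ⟨a, ha⟩ := (Finite.injective_iff_surjective.1 hg) ⟨c, hc⟩
  have ha' : (σ ⟨a, by omega⟩ : ℕ) % m = c := by simpa [g] using ha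
  exact ⟨⟨a, by omega⟩, a.2, ha', fun l' h1 h2 => hinj _ _ h1 a.2 (h2.trans ha'.symm)⟩

/-- The relation functionals for part one. -/
noncomputable def psi (n m c : ℕ) : (Fin n × Fin n → ℝ) →ₗ[ℝ] ℝ :=
  ∑ l : Fin n, ∑ x : Fin n,
    (if (l : ℕ) < m ∧ (x : ℕ) % m = c then (1 : ℝ) else 0) • LinearMap.proj (l, x)

lemma psi_apply (n m c : ℕ) (v : Fin n × Fin n → ℝ) :
    psi n m c v = ∑ l : Fin n, ∑ x : Fin n,
      if (l : ℕ) < m ∧ (x : ℕ) % m = c then v (l, x) else 0 := by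
  simp only [psi, LinearMap.sum_apply, LinearMap.smul_apply, LinearMap.proj_apply, smul_eq_mul, ite_mul,
    one_mul, zero_mul]

lemma psi_perm {n : ℕ} {σ : Equiv.Perm (Fin n)} (hσ : σ ∈ Av132312 n) (m c : ℕ)
    (hm : m ≤ n) (hc : c < m) : psi n m c (permMatrix σ) = 1 := by
  obtain ⟨l, h1, h2, h3⟩ := Av_residue hσ m c hm hc
  rw [psi_apply, Finset.sum_eq_single l, Finset.sum_eq_single (σ l)]
  · simp [h1, h2, permMatrix]
  · intro x _ hx
    simp [permMatrix, Ne.symm hx]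
  · simp
  · intro l' _ hl
    refine Finset.sum_eq_zero fun x _ => ?_
    by_cases hx : σ l' = x
    · subst hx
      rw [if_neg]
      rintro ⟨h4, h5⟩
      exact hl (h3 l' h4 h5)
    · simp [permMatrix, hx]
  · simp

noncomputable def phi1 (n : ℕ) :
    (Fin n × Fin n → ℝ) →ₗ[ℝ] ((Σ j : Fin n, Fin j) → ℝ) :=
  LinearMap.pi fun t => LinearMap.proj (⟨t.2, t.2.2.trans t.1.2⟩, t.1)

lemma phi1_apply (n : ℕ) (v) (t : Σ j : Fin n, Fin j) :
    phi1 n v t = v (⟨t.2, t.2.2.trans t.1.2⟩, t.1) := rfl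

/-- Unit vectors, zero on or below the diagonal. -/
noncomputable def ev (n i j : ℕ) : (Σ j : Fin n, Fin j) → ℝ :=
  fun t => if (t.2 : ℕ) = i ∧ (t.1 : ℕ) = j then 1 else 0

lemma exists_pair (n i j : ℕ) (hij : i < j) (hj : j < n) :
    ∃ σ ∈ Av132312 n, ∃ τ ∈ Av132312 n, phi1 n (permMatrix σ) - phi1 n (permMatrix τ) =
      ev n i j - ev n i (j - i - 1) - ev n (i + 1) j + ev n (i + 1) (j - i - 1) := by
  obtain ⟨σ, hσ⟩ := exists_perm n
    (fun p => if p ≤ i then j - i + p else if p ≤ j then j - p else p)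
    (by intro p hp; split_ifs <;> omega)
    (by intro p hp q hq; split_ifs <;> omega)
  obtain ⟨τ, hτ⟩ := exists_perm n
    (fun p => if p < i then j - i + p else if p = i then j - i - 1 else if p = i + 1 then j
      else if p ≤ j then j - p else p)
    (by intro p hp; split_ifs <;> omega)
    (by intro p hp q hq; split_ifs <;> omega)
  refine ⟨σ, ?_, τ, ?_, ?_⟩
  · rw [mem_Av]
    intro p q r
    simp only [Fin.lt_def, hσ]
    split_ifs <;> omega
  · rw [mem_Av]
    intro p q r
    simp only [Fin.lt_def, hτ]
    split_ifs <;> omega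
  · ext ⟨⟨y', hy⟩, ⟨x', hx⟩⟩
    simp only [Pi.sub_apply, Pi.add_apply, phi1_apply, permMatrix, ev, Fin.ext_iff, hσ, hτ]
    rcases lt_trichotomy x' i with h | h | h
    · have e1 : x' ≤ i := by omega
      have e2 : x' ≠ i := by omega
      have e3 : x' ≠ i + 1 := by omega
      simp [h, e1, e2, e3]
    · subst h
      have e4 : x' ≠ x' + 1 := by omega
      have e5 : j - x' + x' = j := by omega
      simp [e5, eq_comm]
    · have e1 : ¬ x' ≤ i := by omega
      have e2 : x' ≠ i := by omega
      have e3 : ¬ x' < i := by omega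
      by_cases h5 : x' = i + 1
      · subst h5
        have e6 : j - (i + 1) = j - i - 1 := by omega
        have e7 : i + 1 ≤ j := by omega
        simp [e6, e7, eq_comm]
        ring
      · simp [e1, e2, e3, h5]

lemma ev_mem (n : ℕ) : ∀ d i j : ℕ, n ≤ i + d → j < n →
    ev n i j ∈ (vectorSpan ℝ (permMatrix '' Av132312 n)).map (phi1 n) := by
  have hz : ∀ i j, j ≤ i → ev n i j = 0 := by
    intro i j h
    ext ⟨y, x⟩
    have hx := x.2
    simp only [ev, Pi.zero_apply, ite_eq_right_iff]
    rintro ⟨h1, h2⟩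
    omega
  intro d
  induction d with
  | zero =>
    intro i j h hj
    rw [hz i j (by omega)]
    exact Submodule.zero_mem _
  | succ d ih =>
    intro i j
    induction j using Nat.strong_induction_on with
    | _ j ihj =>
      intro h hj
      by_cases hij : j ≤ i
      · rw [hz i j hij]
        exact Submodule.zero_mem _
      push Not at hij
      obtain ⟨σ, hσ, τ, hτ, he⟩ := exists_pair n i j hij hj
      have h1 : phi1 n (permMatrix σ) - phi1 n (permMatrix τ) ∈
          (vectorSpan ℝ (permMatrix '' Av132312 n)).map (phi1 n) := by
        rw [← map_sub]
        exact Submodule.mem_map_of_mem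
          (vsub_mem_vectorSpan ℝ (Set.mem_image_of_mem _ hσ) (Set.mem_image_of_mem _ hτ))
      have h2 := ihj (j - i - 1) (by omega) h (by omega)
      have h3 := ih (i + 1) j (by omega) hj
      have h4 := ih (i + 1) (j - i - 1) (by omega) (by omega)
      have : ev n i j = (phi1 n (permMatrix σ) - phi1 n (permMatrix τ)) + ev n i (j - i - 1)
          + ev n (i + 1) j - ev n (i + 1) (j - i - 1) := by
        rw [he]; abel
      rw [this]
      exact Submodule.sub_mem _ (Submodule.add_mem _ (Submodule.add_mem _ h1 h2) h3) h4

theorem part1 (n : ℕ) :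
    Module.finrank ℝ ↥(vectorSpan ℝ (permMatrix '' Av132312 n)) = n.choose 2 := by
  refine finrank_of n _ (phi1 n) ?_ ?_
  · intro v hv h0
    have hup : ∀ i j : Fin n, i < j → v (i, j) = 0 := fun i j hij =>
      congrFun h0 ⟨j, ⟨i, hij⟩⟩
    have key : ∀ i : ℕ, ∀ hi : i < n, ∀ j : Fin n, v (⟨i, hi⟩, j) = 0 := by
      intro i
      induction i using Nat.strong_induction_on with
      | _ i ih =>
        intro hi j
        by_cases hij : i < (j : ℕ)
        · exact hup _ _ hij
        have := rel (psi n (i + 1) j) 1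
          (fun σ hσ => psi_perm hσ (i + 1) j (by omega) (by omega)) v hv
        rw [psi_apply, Finset.sum_eq_single ⟨i, hi⟩, Finset.sum_eq_single j] at this
        · rwa [if_pos] at this
          exact ⟨by simp, Nat.mod_eq_of_lt (by omega)⟩
        · intro x _ hx
          by_cases hxi : i < (x : ℕ)
          · rw [hup _ _ hxi]; simp
          · rw [if_neg]
            rintro ⟨_, h2⟩
            rw [Nat.mod_eq_of_lt (by omega)] at h2
            exact hx (Fin.ext h2)
        · simp
        · intro l _ hl
          refine Finset.sum_eq_zero fun x _ => ?_
          by_cases hli : (l : ℕ) < i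
          · rw [ih l hli l.2 x]; simp
          · rw [if_neg]
            rintro ⟨h1, _⟩
            exact hl (Fin.ext (by simp; omega))
        · simp
    ext ⟨i, j⟩
    exact key i i.2 j
  · rintro ⟨y, x⟩
    have := ev_mem n n x y (by omega) y.2
    convert this using 1
    ext ⟨y', x'⟩
    simp only [ev, Pi.single_apply]
    congr 1
    rw [eq_iff_iff]
    constructor
    · intro h
      cases h
      exact ⟨rfl, rfl⟩
    · rintro ⟨h1, h2⟩
      have : y' = y := Fin.ext h2
      subst this
      have : x' = x := Fin.ext h1
      subst this
      rfl

/-! ### Part two -/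

lemma anti_le (f : ℕ → ℕ) (N : ℕ) (h : ∀ i, i + 1 < N → f (i + 1) < f i) :
    ∀ d i, i + d < N → f (i + d) + d ≤ f i := by
  intro d
  induction d with
  | zero => intro i _; simp
  | succ d ih =>
    intro i hi
    have h1 := ih i (by omega)
    have h2 := h (i + d) (by omega)
    have h3 : i + (d + 1) = i + d + 1 := by ring
    rw [h3]; omega

/-- Position of the peaks (and of the final valley if `n` is odd). -/
def pk (n m : ℕ) : ℕ := min (2 * m + 1) (n - 1)

structure Good (n : ℕ) (s : ℕ → ℕ) : Prop where
  lt : ∀ p < n, s p < n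
  inj : ∀ p < n, ∀ q < n, s p = s q → p = q
  V : ∀ l, l + 1 < n / 2 → s (2 * (l + 1)) < s (2 * l)
  P : ∀ m, m + 1 < (n + 1) / 2 → s (pk n (m + 1)) < s (pk n m)
  VP : ∀ l, l < n / 2 → s (2 * l) < s (pk n l)

lemma good_of_mem {n : ℕ} {σ : Equiv.Perm (Fin n)} (hσ : σ ∈ AltAv123 n) :
    Good n (fun p => if h : p < n then (σ ⟨p, h⟩ : ℕ) else 0) := by
  obtain ⟨ha, h123⟩ := hσ
  rw [contains123_iff] at h123
  set s : ℕ → ℕ := fun p => if h : p < n then (σ ⟨p, h⟩ : ℕ) else 0 with hs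
  have sv : ∀ p (h : p < n), s p = σ ⟨p, h⟩ := fun p h => by simp [hs, h]
  have hlt : ∀ p < n, s p < n := fun p hp => by rw [sv p hp]; exact (σ _).2
  have hinj : ∀ p < n, ∀ q < n, s p = s q → p = q := by
    intro p hp q hq h
    rw [sv p hp, sv q hq] at h
    simpa using σ.injective (Fin.ext h)
  have up : ∀ l, 2 * l + 1 < n → s (2 * l) < s (2 * l + 1) := by
    intro l h
    rw [sv _ h, sv (2 * l) (by omega)]
    exact (ha (2 * l) h).1 (by simp)
  have down : ∀ l, 2 * l + 2 < n → s (2 * l + 2) < s (2 * l + 1) := by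
    intro l h
    rw [sv _ h, sv (2 * l + 1) (by omega)]
    exact (ha (2 * l + 1) h).2 (by simp)
  have no : ∀ p q r, p < q → q < r → r < n → s p < s q → s q < s r → False := by
    intro p q r h1 h2 h3 h4 h5
    rw [sv p (by omega), sv q (by omega)] at h4
    rw [sv q (by omega), sv r (by omega)] at h5
    exact h123 ⟨⟨p, by omega⟩, ⟨q, by omega⟩, ⟨r, h3⟩, h1, h2, h4, h5⟩
  refine ⟨hlt, hinj, ?_, ?_, ?_⟩
  · intro l hl
    by_contra hc
    have hne : s (2 * (l + 1)) ≠ s (2 * l) := fun h => by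
      have := hinj _ (by omega) _ (by omega) h
      omega
    exact no (2 * l) (2 * (l + 1)) (2 * (l + 1) + 1) (by omega) (by omega) (by omega)
      (by omega) (up _ (by omega))
  · intro m hm
    have e1 : pk n m = 2 * m + 1 := by unfold pk; omega
    rw [e1]
    by_cases hn : 2 * m + 3 < n
    · have e2 : pk n (m + 1) = 2 * m + 3 := by unfold pk; omega
      rw [e2]
      by_contra hc
      have hne : s (2 * m + 3) ≠ s (2 * m + 1) := fun h => by
        have := hinj _ (by omega) _ (by omega) h
        omega
      exact no (2 * m) (2 * m + 1) (2 * m + 3) (by omega) (by omega) (by omega)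
        (up _ (by omega)) (by omega)
    · by_cases hn2 : n = 2 * m + 3
      · have e2 : pk n (m + 1) = 2 * m + 2 := by unfold pk; omega
        rw [e2]
        exact down m (by omega)
      · omega
  · intro l hl
    have e1 : pk n l = 2 * l + 1 := by unfold pk; omega
    rw [e1]
    exact up l (by omega)

lemma pk_lt {n m : ℕ} (hn : 1 ≤ n) : pk n m < n := by unfold pk; omega

lemma Good.Vle {n : ℕ} {s : ℕ → ℕ} (h : Good n s) {i j : ℕ} (hij : i ≤ j) (hj : j < n / 2) :
    s (2 * j) + (j - i) ≤ s (2 * i) := by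
  have := anti_le (fun l => s (2 * l)) (n / 2) h.V (j - i) i (by omega)
  rwa [Nat.add_sub_cancel' hij] at this

lemma Good.Ple {n : ℕ} {s : ℕ → ℕ} (h : Good n s) {i j : ℕ} (hij : i ≤ j)
    (hj : j < (n + 1) / 2) : s (pk n j) + (j - i) ≤ s (pk n i) := by
  have := anti_le (fun l => s (pk n l)) ((n + 1) / 2) h.P (j - i) i (by omega)
  rwa [Nat.add_sub_cancel' hij] at this

lemma Good.injOn {n : ℕ} {s : ℕ → ℕ} (h : Good n s) (A B : Finset ℕ)
    (hA : ∀ l ∈ A, l < n / 2) (hB : ∀ m ∈ B, m < (n + 1) / 2) :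
    Set.InjOn (Sum.elim (fun l => s (2 * l)) (fun m => s (pk n m)))
      (A.disjSum B : Finset (ℕ ⊕ ℕ)) := by
  rintro (a | a) ha (b | b) hb hab <;>
    simp only [Finset.mem_coe, Finset.inl_mem_disjSum, Finset.inr_mem_disjSum] at ha hb <;>
    simp only [Sum.elim_inl, Sum.elim_inr] at hab
  · have h1 := hA a ha
    have h2 := hA b hb
    have := h.inj _ (by omega) _ (by omega) hab
    congr 1; omega
  · have h1 := hA a ha
    have h2 := hB b hb
    have := h.inj _ (by omega) _ (pk_lt (by omega)) hab
    unfold pk at this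
    omega
  · have h1 := hB a ha
    have h2 := hA b hb
    have := h.inj _ (pk_lt (by omega)) _ (by omega) hab
    unfold pk at this
    omega
  · have h1 := hB a ha
    have h2 := hB b hb
    have := h.inj _ (pk_lt (by omega)) _ (pk_lt (by omega)) hab
    unfold pk at this
    congr 1; omega

lemma Good.xor {n : ℕ} {s : ℕ → ℕ} (h : Good n s) (l m : ℕ) (hl : l < n / 2)
    (hm : m < (n + 1) / 2) :
    n ≤ s (2 * l) + (l + m + 1) ↔ ¬ n ≤ s (pk n m) + (l + m + 1) := by
  constructor
  · intro h1 h2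
    have := Finset.card_le_card_of_injOn (s := (range (l + 1)).disjSum (range (m + 1)))
      (t := Finset.Ico (n - (l + m + 1)) n) _ ?_
      (h.injOn _ _ (fun a ha => by simp at ha; omega) (fun a ha => by simp at ha; omega))
    · simp at this; omega
    · rintro (a | a) ha <;> simp only [Finset.mem_coe, Finset.inl_mem_disjSum,
        Finset.inr_mem_disjSum, Finset.mem_range] at ha <;>
        simp only [Sum.elim_inl, Sum.elim_inr, Finset.coe_Ico, Set.mem_Ico]
      · have h3 := h.Vle (i := a) (j := l) (by omega) hl
        have h4 := h.lt (2 * a) (by omega)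
        omega
      · have h3 := h.Ple (i := a) (j := m) (by omega) hm
        have h4 := h.lt (pk n a) (pk_lt (by omega))
        omega
  · intro h2
    by_contra h1
    have := Finset.card_le_card_of_injOn
      (s := (Finset.Ico l (n / 2)).disjSum (Finset.Ico m ((n + 1) / 2)))
      (t := Finset.range (n - (l + m + 1))) _ ?_
      (h.injOn _ _ (fun a ha => by simp at ha; omega) (fun a ha => by simp at ha; omega))
    · simp at this; omega
    · rintro (a | a) ha <;> simp only [Finset.mem_coe, Finset.inl_mem_disjSum,
        Finset.inr_mem_disjSum, Finset.mem_Ico] at ha <;>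
        simp only [Sum.elim_inl, Sum.elim_inr, Finset.coe_range, Set.mem_Iio]
      · have h3 := h.Vle (i := l) (j := a) (by omega) (by omega)
        omega
      · have h3 := h.Ple (i := m) (j := a) (by omega) (by omega)
        omega

lemma Good.P_low {n : ℕ} {s : ℕ → ℕ} (h : Good n s) (m : ℕ) (hm : m < (n + 1) / 2) :
    s (pk n m) + m < n := by
  have h1 := h.Ple (i := 0) (j := m) (by omega) hm
  have h2 := h.lt (pk n 0) (pk_lt (by omega))
  omega

lemma Good.P_high {n : ℕ} {s : ℕ → ℕ} (h : Good n s) (m : ℕ) (hm : m < (n + 1) / 2) :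
    n ≤ s (pk n m) + (2 * m + 1) := by
  by_cases h1 : m < n / 2
  · by_contra hc
    have e : m + m + 1 = 2 * m + 1 := by ring
    have h2 := (h.xor m m h1 hm).2 (by rw [e]; exact hc)
    have h3 := h.VP m h1
    omega
  · omega

lemma Good.V_low {n : ℕ} {s : ℕ → ℕ} (h : Good n s) (l : ℕ) (hl : l < n / 2) :
    s (2 * l) + l < n := by
  have h1 := h.Vle (i := 0) (j := l) (by omega) hl
  have h2 := h.lt (2 * 0) (by omega)
  omega

lemma Good.V_high {n : ℕ} {s : ℕ → ℕ} (h : Good n s) (l : ℕ) (hl : l < n / 2) :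
    n ≤ s (2 * l) + (l + (n + 1) / 2 + 1) := by
  have h1 := h.Vle (i := l) (j := n / 2 - 1) (by omega) (by omega)
  omega

/-- Cumulative row functional: sum of the last `y` entries of row `r`. -/
noncomputable def cum (n : ℕ) (r : Fin n) (y : ℕ) : (Fin n × Fin n → ℝ) →ₗ[ℝ] ℝ :=
  ∑ x : Fin n, (if n ≤ (x : ℕ) + y then (1 : ℝ) else 0) • LinearMap.proj (r, x)

lemma cum_apply (n : ℕ) (r : Fin n) (y : ℕ) (v : Fin n × Fin n → ℝ) :
    cum n r y v = ∑ x : Fin n, if n ≤ (x : ℕ) + y then v (r, x) else 0 := by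
  simp only [cum, LinearMap.sum_apply, LinearMap.smul_apply, LinearMap.proj_apply, smul_eq_mul, ite_mul,
    one_mul, zero_mul]

lemma cum_perm {n : ℕ} (σ : Equiv.Perm (Fin n)) (r : Fin n) (y : ℕ) :
    cum n r y (permMatrix σ) = if n ≤ (σ r : ℕ) + y then 1 else 0 := by
  rw [cum_apply, Finset.sum_eq_single (σ r)]
  · simp [permMatrix]
  · intro x _ hx
    simp [permMatrix, Ne.symm hx]
  · simp

lemma entry_eq (n : ℕ) (r x : Fin n) (v : Fin n × Fin n → ℝ) :
    v (r, x) = cum n r (n - x) v - cum n r (n - x - 1) v := by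
  rw [cum_apply, cum_apply, ← Finset.sum_sub_distrib, Finset.sum_eq_single x]
  · have h1 : n ≤ (x : ℕ) + (n - x) := by omega
    have h2 : ¬ n ≤ (x : ℕ) + (n - x - 1) := by omega
    simp [h2]
  · intro z _ hz
    have hz' : (z : ℕ) ≠ x := fun h => hz (Fin.ext h)
    by_cases h1 : (x : ℕ) < z
    · have h2 : n ≤ (z : ℕ) + (n - x) := by omega
      have h3 : n ≤ (z : ℕ) + (n - x - 1) := by omega
      rw [if_pos h2, if_pos h3, sub_self]
    · have h2 : ¬ n ≤ (z : ℕ) + (n - x) := by omega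
      have h3 : ¬ n ≤ (z : ℕ) + (n - x - 1) := by omega
      rw [if_neg h2, if_neg h3, sub_self]
  · simp

noncomputable def phi2 (n : ℕ) (hn : 1 ≤ n) :
    (Fin n × Fin n → ℝ) →ₗ[ℝ] ((Σ j : Fin ((n + 1) / 2), Fin j) → ℝ) :=
  LinearMap.pi fun t => cum n ⟨pk n t.1, pk_lt hn⟩ (t.1 + 1 + t.2)

lemma phi2_apply (n : ℕ) (hn : 1 ≤ n) (v) (t : Σ j : Fin ((n + 1) / 2), Fin j) :
    phi2 n hn v t = cum n ⟨pk n t.1, pk_lt hn⟩ (t.1 + 1 + t.2) v := rfl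

/-- The word `P^m V^d P V P^* V^*` (`c = 0`), or with the middle `P V` switched (`c = 1`). -/
def wordFn (n m d c p : ℕ) : ℕ :=
  if p % 2 = 0 ∧ p + 1 < n then
    (if p / 2 < d then m + p / 2 else if p / 2 = d then m + d + (1 - c)
      else (n + 1) / 2 + p / 2)
  else (if p / 2 < m then p / 2 else if p / 2 = m then m + d + c else p / 2 + d + 1)

lemma exists_alt (n m d c : ℕ) (hm : m < (n + 1) / 2) (hd : d < m) (hc : c ≤ 1) :
    ∃ σ ∈ AltAv123 n, ∀ p : Fin n, (σ p : ℕ) = n - 1 - wordFn n m d c p := by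
  have hw : ∀ p < n, wordFn n m d c p < n := by
    intro p hp; unfold wordFn; split_ifs <;> omega
  obtain ⟨σ, hσ⟩ := exists_perm n (fun p => n - 1 - wordFn n m d c p)
    (by intro p hp; omega)
    (by
      intro p hp q hq h
      have h1 := hw p hp
      have h2 := hw q hq
      have h3 : wordFn n m d c p = wordFn n m d c q := by omega
      revert h3
      unfold wordFn
      split_ifs <;> omega)
  refine ⟨σ, ⟨?_, ?_⟩, hσ⟩
  · intro j hj
    have h1 := hw j (by omega)
    have h2 := hw (j + 1) hj
    simp only [Fin.lt_def, hσ]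
    constructor
    · rintro hev
      rw [Nat.even_iff] at hev
      have : wordFn n m d c (j + 1) < wordFn n m d c j := by
        unfold wordFn
        split_ifs <;> omega
      omega
    · rintro hev
      rw [Nat.odd_iff] at hev
      have : wordFn n m d c j < wordFn n m d c (j + 1) := by
        unfold wordFn
        split_ifs <;> omega
      omega
  · rw [contains123_iff]
    rintro ⟨p, q, r, h1, h2, h3, h4⟩
    simp only [Fin.lt_def, hσ] at h1 h2 h3 h4
    have hp := p.2
    have hq := q.2
    have hr := r.2
    generalize (p : ℕ) = p' at *
    generalize (q : ℕ) = q' at *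
    generalize (r : ℕ) = r' at *
    have key : ∀ a b, a < b → b < n →
        ((a % 2 = 0 ∧ a + 1 < n) ↔ (b % 2 = 0 ∧ b + 1 < n)) →
        wordFn n m d c a < wordFn n m d c b := by
      intro a b hab hb hiff
      unfold wordFn
      split_ifs <;> omega
    have h5 : wordFn n m d c q' < wordFn n m d c p' := by omega
    have h6 : wordFn n m d c r' < wordFn n m d c q' := by omega
    have k1 := key p' q' h1 hq
    have k2 := key q' r' h2 hr
    have k3 := key p' r' (by omega) hr
    by_cases a1 : (p' % 2 = 0 ∧ p' + 1 < n) <;> by_cases a2 : (q' % 2 = 0 ∧ q' + 1 < n) <;>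
      by_cases a3 : (r' % 2 = 0 ∧ r' + 1 < n) <;> simp only [a1, a2, a3] at k1 k2 k3 <;>
      simp at k1 k2 k3 <;> omega

theorem part2 (n : ℕ) (hn : 1 ≤ n) :
    Module.finrank ℝ ↥(vectorSpan ℝ (permMatrix '' AltAv123 n)) = ((n + 1) / 2).choose 2 := by
  refine finrank_of _ _ (phi2 n hn) ?_ ?_
  · intro v hv h0
    have hP : ∀ m (_ : m < (n + 1) / 2) y, cum n ⟨pk n m, pk_lt hn⟩ y v = 0 := by
      intro m hm y
      by_cases h1 : y ≤ m
      · refine rel _ 0 (fun σ hσ => ?_) v hv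
        have := (good_of_mem hσ).P_low m hm
        simp only [pk_lt hn, dif_pos] at this
        rw [cum_perm, if_neg (by omega)]
      by_cases h2 : 2 * m + 1 ≤ y
      · refine rel _ 1 (fun σ hσ => ?_) v hv
        have := (good_of_mem hσ).P_high m hm
        simp only [pk_lt hn, dif_pos] at this
        rw [cum_perm, if_pos (by omega)]
      have := congrFun h0 ⟨⟨m, hm⟩, ⟨y - m - 1, by simp; omega⟩⟩
      rw [phi2_apply] at this
      have e : m + 1 + (y - m - 1) = y := by omega
      simpa [e] using this
    have hV : ∀ l (hl : l < n / 2) y, cum n ⟨2 * l, by omega⟩ y v = 0 := by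
      intro l hl y
      by_cases h1 : y ≤ l
      · refine rel _ 0 (fun σ hσ => ?_) v hv
        have := (good_of_mem hσ).V_low l hl
        rw [dif_pos (by omega)] at this
        rw [cum_perm, if_neg (by omega)]
      by_cases h2 : l + (n + 1) / 2 + 1 ≤ y
      · refine rel _ 1 (fun σ hσ => ?_) v hv
        have := (good_of_mem hσ).V_high l hl
        rw [dif_pos (by omega)] at this
        rw [cum_perm, if_pos (by omega)]
      have hm : y - l - 1 < (n + 1) / 2 := by omega
      have := rel (cum n ⟨2 * l, by omega⟩ y + cum n ⟨pk n (y - l - 1), pk_lt hn⟩ y) 1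
        (fun σ hσ => by
          have := (good_of_mem hσ).xor l (y - l - 1) hl hm
          rw [dif_pos (by omega), dif_pos (pk_lt hn),
            show l + (y - l - 1) + 1 = y by omega] at this
          rw [LinearMap.add_apply, cum_perm, cum_perm]
          by_cases hc : n ≤ (σ ⟨pk n (y - l - 1), pk_lt hn⟩ : ℕ) + y
          · rw [if_pos hc, if_neg (by rw [this]; exact not_not.2 hc)]; norm_num
          · rw [if_neg hc, if_pos (this.2 hc)]; norm_num) v hv
      rw [LinearMap.add_apply, hP _ hm, add_zero] at this
      exact this
    have hall : ∀ (r : Fin n) y, cum n r y v = 0 := by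
      intro r y
      by_cases hr : (r : ℕ) % 2 = 0 ∧ (r : ℕ) + 1 < n
      · have : r = ⟨2 * (r / 2 : ℕ), by omega⟩ := Fin.ext (by simp; omega)
        rw [this]
        exact hV _ (by omega) y
      · have : r = ⟨pk n (r / 2 : ℕ), pk_lt hn⟩ := Fin.ext (by simp [pk]; omega)
        rw [this]
        exact hP _ (by omega) y
    ext ⟨r, x⟩
    rw [entry_eq n r x v, hall, hall]
    simp
  · rintro ⟨m, d⟩
    obtain ⟨σ, hσ, hs⟩ := exists_alt n m d 0 m.2 d.2 (by omega)
    obtain ⟨τ, hτ, ht⟩ := exists_alt n m d 1 m.2 d.2 (by omega)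
    refine ⟨permMatrix σ - permMatrix τ, vsub_mem_vectorSpan ℝ (Set.mem_image_of_mem _ hσ)
      (Set.mem_image_of_mem _ hτ), ?_⟩
    ext ⟨q, e⟩
    rw [map_sub, Pi.sub_apply, phi2_apply, phi2_apply, cum_perm, cum_perm, hs, ht,
      Pi.single_apply]
    have hq := q.2
    have he := e.2
    have hm := m.2
    have hd := d.2
    have hw : ∀ c, wordFn n m d c (pk n q) = if (q : ℕ) < m then (q : ℕ)
        else if (q : ℕ) = m then m + d + c else q + d + 1 := by
      intro c
      have h1 : pk n q / 2 = q := by unfold pk; omega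
      have h2 : ¬ (pk n q % 2 = 0 ∧ pk n q + 1 < n) := by unfold pk; omega
      unfold wordFn
      rw [if_neg h2, h1]
    dsimp only
    rw [hw, hw]
    by_cases hqm : q = m
    · subst hqm
      by_cases hed : e = d
      · subst hed
        rw [if_pos, if_neg, if_pos rfl]
        · norm_num
        · simp; omega
        · simp; omega
      · have hed' : (e : ℕ) ≠ d := fun h => hed (Fin.ext h)
        have hne : (⟨q, e⟩ : Σ j : Fin ((n + 1) / 2), Fin j) ≠ ⟨q, d⟩ := by
          intro h
          exact hed (by simpa using h)
        rw [if_neg hne]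
        simp only [lt_irrefl, if_false, if_true]
        by_cases hlt : (e : ℕ) < d
        · rw [if_neg (by omega), if_neg (by omega)]; norm_num
        · rw [if_pos (by omega), if_pos (by omega)]; norm_num
    · have hqm' : (q : ℕ) ≠ m := fun h => hqm (Fin.ext h)
      have hne : (⟨q, e⟩ : Σ j : Fin ((n + 1) / 2), Fin j) ≠ ⟨m, d⟩ := by
        intro h
        exact hqm (congrArg Sigma.fst h)
      rw [if_neg hne]
      simp only [hqm', if_false, sub_self]

end BirkhoffAux

theorem stmt18 (n : ℕ) (hn : 1 ≤ n) :
    Module.finrank ℝ ↥(vectorSpan ℝ (permMatrix '' Av132312 n)) = n.choose 2 ∧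
    Module.finrank ℝ ↥(vectorSpan ℝ (permMatrix '' AltAv123 n)) = ((n + 1) / 2).choose 2 := by
  exact ⟨BirkhoffAux.part1 n, BirkhoffAux.part2 n hn⟩
end
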